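/- Suppose that X and Y are analytic metric spaces and φ : X → Y is a Borel function that is not Baire class one. Then there exist a function φ_ℕ^ℕ among the three functions 𝕔_{ℕ^ℕ}, ι_{ℕ^ℕ, ℕ^ℕ}, ι_{ℕ^ℕ, ℕ^ℕ_*}, and a function φ_* among the eight functions 𝕔_{ℕ^ℕ_* ∖ ℕ^ℕ}, ι_{ℕ^ℕ_* ∖ ℕ^ℕ, ℕ^ℕ_* ∖ ℕ^ℕ}, ι_{ℕ^ℕ_* ∖ ℕ^ℕ, ℕ^ℕ_*}, and ι_{ℕ^{<ℕ}, Z} ∘ p for Z among the discrete space ℕ^{<ℕ}, the one-point compactification ℕ^{<ℕ} ∪ {∞} of the discrete space ℕ^{<ℕ}, the subspace ℕ^{≤ℕ}_* ∖ ℕ^ℕ, the subspace ℕ^{≤ℕ} = ℕ^{<ℕ} ∪ ℕ^ℕ of ℕ^{≤ℕ}_*, and ℕ^{≤ℕ}_*, such that there is a closed continuous embedding into φ of the function φ_ℕ^ℕ ⊔ φ_* defined on ℕ^ℕ_* (agreeing with φ_ℕ^ℕ on ℕ^ℕ and with φ_* on ℕ^ℕ_* ∖ ℕ^ℕ, taking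 values in the topological disjoint union of the two codomains). -/

import Mathlib

open Set Topology TopologicalSpace
open scoped ENNReal

/-- `t` is an initial segment of `b : ℕ → ℕ`. -/
def PrefixFun (t : List ℕ) (b : ℕ → ℕ) : Prop :=
  ∀ (i : ℕ) (h : i < t.length), t.get ⟨i, h⟩ = b i

/-- The meet `s ∧ t`: the longest common initial segment of two finite sequences. -/
def listMeet : List ℕ → List ℕ → List ℕ
  | a :: s, b :: t => if a = b then a :: listMeet s t else []
  | _, _ => []

/-- A `∧`-embedding: an injection preserving meets. -/
def MeetEmbedding (π : List ℕ → List ℕ) : Prop :=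
  Function.Injective π ∧ ∀ s t, π (listMeet s t) = listMeet (π s) (π t)

/-- The induced map on Baire space: `limSeq π b = ⋃ i, π (b ↾ i)`. -/
def limSeq (π : List ℕ → List ℕ) (b : ℕ → ℕ) : ℕ → ℕ := fun n =>
  (π (List.ofFn fun i : Fin (n + 1) => b i)).getD n 0

/-- Points of the space `ℕ^{≤ℕ}_*`: finite sequences, infinite sequences, and
finite sequences followed by `∞`. -/
inductive NStar : Type
  | fin : List ℕ → NStar
  | inf : (ℕ → ℕ) → NStar
  | lim : List ℕ → NStar

namespace NStar

/-- `t ⊑ c`. -/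
def PrefixOf (t : List ℕ) : NStar → Prop
  | fin s => t <+: s
  | inf b => PrefixFun t b
  | lim s => t <+: s

/-- The basic "cylinder" `N_t = {c | t ⊑ c}`. -/
def cyl (t : List ℕ) : Set NStar := {c | PrefixOf t c}

/-- The smallest topology in which every `{t}` and every `N_t` is clopen. -/
instance : TopologicalSpace NStar :=
  TopologicalSpace.generateFrom
    {S | ∃ t : List ℕ, S = {fin t} ∨ S = ({fin t} : Set NStar)ᶜ ∨ S = cyl t ∨ S = (cyl t)ᶜ}

def IsFin (c : NStar) : Prop := ∃ t, c = fin t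
def IsInf (c : NStar) : Prop := ∃ b, c = inf b
def IsLim (c : NStar) : Prop := ∃ t, c = lim t

/-- The extension of `π : ℕ^{<ℕ} → ℕ^{<ℕ}` to `ℕ^{≤ℕ}_*`. -/
def hat (π : List ℕ → List ℕ) : NStar → NStar
  | fin t => fin (π t)
  | inf b => inf (limSeq π b)
  | lim t => lim (π t)

end NStar

/-- `ℕ^ℕ_* = ℕ^{≤ℕ}_* ∖ ℕ^{<ℕ}`. -/
abbrev NNStar : Type := {c : NStar // ¬ c.IsFin}
/-- `ℕ^ℕ_* ∖ ℕ^ℕ = {t⌢⟨∞⟩ : t ∈ ℕ^{<ℕ}}`. -/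
abbrev NLim : Type := {c : NStar // c.IsLim}
/-- The copy of `ℕ^{<ℕ}` inside `ℕ^{≤ℕ}_*` (a discrete subspace). -/
abbrev NFin : Type := {c : NStar // c.IsFin}
/-- `ℕ^{≤ℕ} = ℕ^{<ℕ} ∪ ℕ^ℕ`. -/
abbrev NFinInf : Type := {c : NStar // ¬ c.IsLim}
/-- `ℕ^{≤ℕ}_* ∖ ℕ^ℕ`. -/
abbrev NFinLim : Type := {c : NStar // ¬ c.IsInf}

def infPt (b : ℕ → ℕ) : NNStar :=
  ⟨NStar.inf b, by rintro ⟨t, h⟩; exact NStar.noConfusion h⟩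

def limPt (t : List ℕ) : NLim := ⟨NStar.lim t, t, rfl⟩

def finPt (t : List ℕ) : NFin := ⟨NStar.fin t, t, rfl⟩

/-- The extension `π̂` restricted to `ℕ^ℕ_*`. -/
def hatNN (π : List ℕ → List ℕ) (c : NNStar) : NNStar :=
  ⟨c.1.hat π, by
    obtain ⟨c, hc⟩ := c
    cases c with
    | fin t => exact fun _ => hc ⟨t, rfl⟩
    | inf b => rintro ⟨t, h⟩; exact NStar.noConfusion h
    | lim t => rintro ⟨s, h⟩; exact NStar.noConfusion h⟩

/-- The extension `π̂` restricted to `ℕ^ℕ_* ∖ ℕ^ℕ`. -/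
def hatLim (π : List ℕ → List ℕ) (c : NLim) : NLim :=
  ⟨c.1.hat π, by obtain ⟨c, t, rfl⟩ := c; exact ⟨π t, rfl⟩⟩

def NLim.toNN (c : NLim) : NNStar :=
  ⟨c.1, by obtain ⟨c, t, rfl⟩ := c; rintro ⟨s, h⟩; exact NStar.noConfusion h⟩

def NLim.base (c : NLim) : List ℕ :=
  match c.1 with
  | .lim t => t
  | .fin t => t
  | .inf _ => []

/-- The map `p : t⌢⟨∞⟩ ↦ t`, with values in the discrete copy of `ℕ^{<ℕ}`. -/
def pFin (c : NLim) : NFin := finPt c.base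

def NFin.toFinLim (c : NFin) : NFinLim :=
  ⟨c.1, by obtain ⟨c, t, rfl⟩ := c; rintro ⟨b, h⟩; exact NStar.noConfusion h⟩

def NFin.toFinInf (c : NFin) : NFinInf :=
  ⟨c.1, by obtain ⟨c, t, rfl⟩ := c; rintro ⟨s, h⟩; exact NStar.noConfusion h⟩

/-- A closed continuous embedding of `φ` into `φ'`: a pair of injective continuous closed
maps `πX : X → X'` and `πY : cl(φ[X]) → cl(φ'[X'])` with `φ' ∘ πX = πY ∘ φ`. -/
def ClosedContinuousEmbedding {X Y X' Y' : Type*} [TopologicalSpace X] [TopologicalSpace Y]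
    [TopologicalSpace X'] [TopologicalSpace Y'] (φ : X → Y) (φ' : X' → Y') : Prop :=
  ∃ (πX : X → X') (πY : closure (Set.range φ) → closure (Set.range φ')),
    Continuous πX ∧ Function.Injective πX ∧ IsClosedMap πX ∧
    Continuous πY ∧ Function.Injective πY ∧ IsClosedMap πY ∧
    ∀ x : X, φ' (πX x) = (πY ⟨φ x, subset_closure ⟨x, rfl⟩⟩ : Y')

/-- A topological space is analytic if it is a continuous image of a closed subset of `ℕ^ℕ`. -/
def IsAnalytic (X : Type*) [TopologicalSpace X] : Prop :=
  ∃ C : Set (ℕ → ℕ), IsClosed C ∧ ∃ f : C → X, Continuous f ∧ Function.Surjective f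

/-- Baire measurable: preimages of open sets have the Baire property. -/
def BaireMeasurableFun {X Y : Type*} [TopologicalSpace X] [TopologicalSpace Y]
    (φ : X → Y) : Prop :=
  ∀ V : Set Y, IsOpen V → ∃ U : Set X, IsOpen U ∧ IsMeagre (symmDiff (φ ⁻¹' V) U)

/-- Baire class one: preimages of open sets are `Fσ`. -/
def BaireClassOneFun {X Y : Type*} [TopologicalSpace X] [TopologicalSpace Y]
    (φ : X → Y) : Prop :=
  ∀ V : Set Y, IsOpen V → ∃ F : ℕ → Set X, (∀ n, IsClosed (F n)) ∧ φ ⁻¹' V = ⋃ n, F n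

/-- σ-continuous with closed witnesses. -/
def SigmaContClosed {X Y : Type*} [TopologicalSpace X] [TopologicalSpace Y]
    (φ : X → Y) : Prop :=
  ∃ F : ℕ → Set X, (∀ n, IsClosed (F n)) ∧ (⋃ n, F n) = Set.univ ∧ ∀ n, ContinuousOn φ (F n)

/-- Borel: preimages of open sets are Borel. -/
def BorelFun {X Y : Type*} [TopologicalSpace X] [TopologicalSpace Y] (φ : X → Y) : Prop :=
  ∀ V : Set Y, IsOpen V → @MeasurableSet X (borel X) (φ ⁻¹' V)

/-- The function on `ℕ^ℕ_*` agreeing with `f` on `ℕ^ℕ` and with `g` on `ℕ^ℕ_* ∖ ℕ^ℕ`,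
with values in the topological disjoint union. -/
def combine2 {A B : Type*} (f : (ℕ → ℕ) → A) (g : NLim → B) : NNStar → A ⊕ B := fun c =>
  match c with
  | ⟨.fin t, h⟩ => absurd ⟨t, rfl⟩ h
  | ⟨.inf b, _⟩ => Sum.inl (f b)
  | ⟨.lim t, _⟩ => Sum.inr (g (limPt t))

/-- The constant function `𝕔` on `ℕ^ℕ`, with values in the one-point space. -/
def f1 : (ℕ → ℕ) → PUnit := fun _ => PUnit.unit
/-- The identity of `ℕ^ℕ`. -/
def f2 : (ℕ → ℕ) → ℕ → ℕ := id
/-- The inclusion of `ℕ^ℕ` into `ℕ^ℕ_*`. -/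
def f3 : (ℕ → ℕ) → NNStar := infPt

/-- The constant function `𝕔` on `ℕ^ℕ_* ∖ ℕ^ℕ`. -/
def g1 : NLim → PUnit := fun _ => PUnit.unit
/-- The identity of `ℕ^ℕ_* ∖ ℕ^ℕ`. -/
def g2 : NLim → NLim := id
/-- The inclusion of `ℕ^ℕ_* ∖ ℕ^ℕ` into `ℕ^ℕ_*`. -/
def g3 : NLim → NNStar := NLim.toNN
/-- `ι ∘ p` into the discrete space `ℕ^{<ℕ}`. -/
def g4 : NLim → NFin := pFin
/-- `ι ∘ p` into the one-point compactification of the discrete space `ℕ^{<ℕ}`. -/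
def g5 : NLim → OnePoint NFin := fun c => OnePoint.some (pFin c)
/-- `ι ∘ p` into `ℕ^{≤ℕ}_* ∖ ℕ^ℕ`. -/
def g6 : NLim → NFinLim := fun c => NFin.toFinLim (pFin c)
/-- `ι ∘ p` into `ℕ^{≤ℕ} = ℕ^{<ℕ} ∪ ℕ^ℕ`. -/
def g7 : NLim → NFinInf := fun c => NFin.toFinInf (pFin c)
/-- `ι ∘ p` into `ℕ^{≤ℕ}_*`. -/
def g8 : NLim → NStar := fun c => (pFin c).1

/-!
Since `φ` is not of Baire class one, there are disjoint closed sets `C` and `D` whose preimages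
cannot be separated by an `Fσ` set. A Hurewicz-style construction then yields a continuous injective
copy of `ℕ^ℕ_*` in `X` which sends `ℕ^ℕ` into `φ⁻¹(C)` and the points `t⌢⟨∞⟩` into `φ⁻¹(D)`; as this
copy is compact, it is automatically closed.

It remains to simplify the two restrictions of `φ` by passing to the range of an embedding of the
tree `ℕ^{<ℕ}`. Each restriction, composed with an embedding of `Y` in the Hilbert cube, is made
constant, convergent to a single point, or extendable to an injective continuous map on
`ℕ^{≤ℕ}_*`. The closed embedding type of the restriction depends only on which added points the
extension sends into `Y`. For every kind of point either all or none are sent into `Y` after a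
further passage to a subtree: by the pigeonhole principle for nodes, and by Baire category for
branches.
-/

/-! ## Finite sequences and their branches -/

theorem not_append_singleton_prefix {α : Type*} (t : List α) (a : α) : ¬ t ++ [a] <+: t :=
  fun h => by simpa using h.length_le

theorem append_singleton_prefix_inj {α : Type*} {t u : List α} {a b : α}
    (ha : t ++ [a] <+: u) (hb : t ++ [b] <+: u) : a = b := by
  obtain ⟨v, rfl⟩ := ha
  simpa [eq_comm] using hb

theorem eq_or_append_singleton_prefix {α : Type*} {t u : List α} (h : t <+: u) :
    u = t ∨ ∃ a, t ++ [a] <+: u := by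
  obtain ⟨_ | ⟨a, v⟩, rfl⟩ := h
  · simp
  · exact Or.inr ⟨a, v, by simp⟩

theorem antitone_of_append_singleton_subset {α Z : Type*} {F : List α → Set Z}
    (h : ∀ t a, F (t ++ [a]) ⊆ F t) {s t : List α} (hst : s <+: t) : F t ⊆ F s := by
  obtain ⟨u, rfl⟩ := hst
  induction u using List.reverseRecOn with
  | nil => simp
  | append_singleton u a ih => exact (List.append_assoc s u [a] ▸ h _ _).trans ih

theorem exists_tree {α : Type*} {P : α → Prop} {R : ℕ → α → (ℕ → α) → Prop} {a : α} (ha : P a)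
    (step : ∀ j x, P x → ∃ q : ℕ → α, (∀ n, P (q n)) ∧ R j x q) :
    ∃ p : List ℕ → α, p [] = a ∧ (∀ t, P (p t)) ∧ ∀ t, R t.length (p t) fun n => p (t ++ [n]) := by
  choose! q hqP hqR using step
  let p (t : List ℕ) : α :=
    List.reverseRecOn t a fun t n x => q t.length x n
  have p_append (t : List ℕ) (n : ℕ) : p (t ++ [n]) = q t.length (p t) n := by
    simp [p]
  have hP (t : List ℕ) : P (p t) := by
    induction t using List.reverseRecOn with
    | nil => simpa [p] using ha
    | append_singleton t n ih => exact p_append t n ▸ hqP _ _ ih n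
  refine ⟨p, by simp [p], hP, fun t => ?_⟩
  simpa only [p_append] using hqR _ _ (hP t)

/-- The initial segment `b ↾ n` of an infinite sequence. -/
def initSeg (b : ℕ → ℕ) (n : ℕ) : List ℕ := List.ofFn fun i : Fin n => b i

@[simp] theorem length_initSeg (b : ℕ → ℕ) (n : ℕ) : (initSeg b n).length = n := by simp [initSeg]

@[simp] theorem initSeg_zero (b : ℕ → ℕ) : initSeg b 0 = [] := by simp [initSeg]

theorem initSeg_succ (b : ℕ → ℕ) (n : ℕ) : initSeg b (n + 1) = initSeg b n ++ [b n] := by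
  simp only [initSeg, List.ofFn_succ', List.concat_eq_append, Fin.val_castSucc, Fin.val_last]

theorem initSeg_prefix_initSeg (b : ℕ → ℕ) {m n : ℕ} (h : m ≤ n) :
    initSeg b m <+: initSeg b n := by
  induction n, h using Nat.le_induction with
  | base => exact List.prefix_rfl
  | succ n _ ih => exact ih.trans (initSeg_succ b n ▸ List.prefix_append _ _)

theorem exists_branch {P : List ℕ → Prop} (h0 : P []) (hs : ∀ t, P t → ∃ n, P (t ++ [n])) :
    ∃ b, ∀ n, P (initSeg b n) := by
  choose! f hf using hs
  let g (n : ℕ) : List ℕ := n.rec [] fun _ t => t ++ [f t]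
  have hg (n : ℕ) : initSeg (fun i => f (g i)) n = g n := by
    induction n with
    | zero => simp [g]
    | succ n ih => rw [initSeg_succ, ih]
  refine ⟨fun i => f (g i), fun n => ?_⟩
  rw [hg]
  induction n with
  | zero => exact h0
  | succ n ih => exact hf _ ih

theorem prefixFun_iff {t : List ℕ} {b : ℕ → ℕ} : PrefixFun t b ↔ initSeg b t.length = t := by
  simp [PrefixFun, List.ext_getElem_iff, initSeg, eq_comm]

theorem prefixFun_initSeg (b : ℕ → ℕ) (n : ℕ) : PrefixFun (initSeg b n) b := by
  rw [prefixFun_iff, length_initSeg]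

namespace PrefixFun

variable {s t : List ℕ} {b c : ℕ → ℕ}

theorem prefix_initSeg (h : PrefixFun t b) {n : ℕ} (hn : t.length ≤ n) : t <+: initSeg b n :=
  prefixFun_iff.1 h ▸ initSeg_prefix_initSeg b hn

theorem initSeg_prefix (h : PrefixFun t b) {n : ℕ} (hn : n ≤ t.length) : initSeg b n <+: t := by
  simpa only [prefixFun_iff.1 h] using initSeg_prefix_initSeg b hn

theorem of_prefix (h : s <+: t) (ht : PrefixFun t b) : PrefixFun s b := by
  rw [prefixFun_iff]
  exact List.prefix_of_prefix_length_le (ht.initSeg_prefix h.length_le) h (by simp)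
    |>.eq_of_length (by simp)

theorem prefix_or_prefix (hs : PrefixFun s b) (ht : PrefixFun t b) : s <+: t ∨ t <+: s :=
  (le_total s.length t.length).imp
    (fun h => prefixFun_iff.1 hs ▸ ht.initSeg_prefix h)
    (fun h => prefixFun_iff.1 ht ▸ hs.initSeg_prefix h)

theorem append_singleton (h : PrefixFun t b) : PrefixFun (t ++ [b t.length]) b := by
  rw [prefixFun_iff, List.length_append, List.length_singleton, initSeg_succ, prefixFun_iff.1 h]

end PrefixFun

theorem eq_of_forall_prefixFun_initSeg {b c : ℕ → ℕ} (h : ∀ n, PrefixFun (initSeg b n) c) :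
    b = c := by
  funext i
  simpa only [initSeg, List.get_eq_getElem, List.getElem_ofFn] using h (i + 1) i (by simp)

/-- The basic clopen set of all infinite sequences extending `t`. -/
def seqCyl (t : List ℕ) : Set (ℕ → ℕ) := {b | PrefixFun t b}

theorem seqCyl_anti {s t : List ℕ} (h : s <+: t) : seqCyl t ⊆ seqCyl s :=
  fun _ => PrefixFun.of_prefix h

theorem seqCyl_initSeg (b : ℕ → ℕ) (n : ℕ) : seqCyl (initSeg b n) = PiNat.cylinder b n := by
  ext c
  simp [seqCyl, PrefixFun, initSeg, PiNat.mem_cylinder_iff, eq_comm]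

theorem seqCyl_nil : seqCyl [] = univ := eq_univ_of_forall fun _ _ h => absurd h (Nat.not_lt_zero _)

theorem nonempty_seqCyl (t : List ℕ) : (seqCyl t).Nonempty :=
  ⟨fun i => t.getD i 0, fun i hi => by simp [hi]⟩

theorem isOpen_seqCyl (t : List ℕ) : IsOpen (seqCyl t) := by
  obtain ⟨b, hb⟩ := nonempty_seqCyl t
  rw [← prefixFun_iff.1 hb, seqCyl_initSeg]
  exact PiNat.isOpen_cylinder _ b _

theorem exists_seqCyl_initSeg_subset {U : Set (ℕ → ℕ)} {b : ℕ → ℕ} (hU : U ∈ 𝓝 b) :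
    ∃ n, seqCyl (initSeg b n) ⊆ U := by
  obtain ⟨_, ⟨c, n, rfl⟩, hbc, hcU⟩ :=
    (PiNat.isTopologicalBasis_cylinders fun _ : ℕ => ℕ).mem_nhds_iff.1 hU
  exact ⟨n, by rwa [seqCyl_initSeg, PiNat.mem_cylinder_iff_eq.1 hbc]⟩

/-! ## The space `ℕ^{≤ℕ}_*` -/

namespace NStar

theorem forall_iff {p : NStar → Prop} :
    (∀ c, p c) ↔ (∀ t, p (fin t)) ∧ (∀ t, p (lim t)) ∧ ∀ b, p (inf b) :=
  ⟨fun h => ⟨fun _ => h _, fun _ => h _, fun _ => h _⟩, fun ⟨hf, hl, hi⟩ c => by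
    cases c with
    | fin t => exact hf t
    | lim t => exact hl t
    | inf b => exact hi b⟩

variable {s t : List ℕ} {b : ℕ → ℕ} {c c' : NStar}

theorem fin_mem_cyl : fin s ∈ cyl t ↔ t <+: s := Iff.rfl

theorem lim_mem_cyl : lim s ∈ cyl t ↔ t <+: s := Iff.rfl

theorem cyl_anti (h : s <+: t) : cyl t ⊆ cyl s := by
  rintro (u | b | u) hc
  · exact h.trans hc
  · exact PrefixFun.of_prefix h hc
  · exact h.trans hc

theorem prefix_or_prefix_of_mem_cyl (hs : c ∈ cyl s) (ht : c ∈ cyl t) : s <+: t ∨ t <+: s := by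
  cases c with
  | fin u => exact List.prefix_or_prefix_of_prefix hs ht
  | lim u => exact List.prefix_or_prefix_of_prefix hs ht
  | inf b => exact PrefixFun.prefix_or_prefix hs ht

theorem mem_cyl_nil (c : NStar) : c ∈ cyl [] := by
  cases c with
  | fin u => exact List.nil_prefix
  | lim u => exact List.nil_prefix
  | inf b => exact fun i hi => absurd hi (by simp)

theorem inf_mem_cyl_initSeg (b : ℕ → ℕ) (n : ℕ) : inf b ∈ cyl (initSeg b n) :=
  prefixFun_initSeg b n

theorem eq_fin_or_lim_or_mem_cyl (h : c ∈ cyl t) :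
    c = fin t ∨ c = lim t ∨ ∃ n, c ∈ cyl (t ++ [n]) := by
  cases c with
  | fin u => exact (eq_or_append_singleton_prefix h).imp (congrArg fin) Or.inr
  | lim u => exact Or.inr ((eq_or_append_singleton_prefix h).imp_left (congrArg lim))
  | inf b => exact Or.inr (Or.inr ⟨_, PrefixFun.append_singleton h⟩)

theorem inf_eq_of_forall_mem_cyl (h : ∀ n, c ∈ cyl (initSeg b n)) : inf b = c := by
  cases c with
  | fin u => simpa using (fin_mem_cyl.1 (h (u.length + 1))).length_le
  | lim u => simpa using (lim_mem_cyl.1 (h (u.length + 1))).length_le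
  | inf b' => exact congrArg inf (eq_of_forall_prefixFun_initSeg h)

/-- The retraction of `ℕ^{≤ℕ}_*` onto `ℕ^ℕ_*` sending each `t` to `t⌢⟨∞⟩`. That
`Function.FactorsThrough collapse Ψ` holds means that `Ψ` identifies no two points except possibly
`t` and `t⌢⟨∞⟩`. -/
def collapse : NStar → NStar
  | fin t => lim t
  | inf b => inf b
  | lim t => lim t

theorem collapse_injOn : InjOn collapse {c | ¬ c.IsFin} := by
  rintro (t | b | t) ht (t' | b' | t') ht' <;> simp_all [collapse, IsFin]

theorem injective_nnStar_of_factorsThrough {Z : Type*} {Ψ : NStar → Z}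
    (h : Function.FactorsThrough collapse Ψ) : Function.Injective fun c : NNStar => Ψ c.1 :=
  fun c c' hc => Subtype.ext (collapse_injOn c.2 c'.2 (h hc))

theorem collapse_eq_lim_iff :
    collapse c = lim t ↔ c ∈ cyl t ∧ ∀ n, c ∉ cyl (t ++ [n]) := by
  constructor
  · intro h
    obtain rfl | rfl : c = fin t ∨ c = lim t := by cases c <;> simp_all [collapse]
    all_goals exact ⟨List.prefix_rfl, fun n => not_append_singleton_prefix t n⟩
  · rintro ⟨h, hn⟩
    obtain rfl | rfl | ⟨n, hc⟩ := eq_fin_or_lim_or_mem_cyl h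
    exacts [rfl, rfl, absurd hc (hn n)]

theorem collapse_eq_collapse_of_forall_mem_cyl_iff (h : ∀ t, c ∈ cyl t ↔ c' ∈ cyl t) :
    collapse c = collapse c' := by
  obtain ⟨t, ht⟩ | ⟨b, rfl⟩ : (∃ t, collapse c = lim t) ∨ ∃ b, c = inf b := by
    cases c <;> simp [collapse]
  · rw [ht, eq_comm, collapse_eq_lim_iff]
    simpa only [h] using collapse_eq_lim_iff.1 ht
  · rw [← inf_eq_of_forall_mem_cyl fun n => (h _).1 (inf_mem_cyl_initSeg b n)]

theorem isClopen_cyl (t : List ℕ) : IsClopen (cyl t) :=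
  ⟨⟨isOpen_generateFrom_of_mem ⟨t, by simp⟩⟩, isOpen_generateFrom_of_mem ⟨t, by simp⟩⟩

theorem isClopen_singleton_fin (t : List ℕ) : IsClopen ({fin t} : Set NStar) :=
  ⟨⟨isOpen_generateFrom_of_mem ⟨t, by simp⟩⟩, isOpen_generateFrom_of_mem ⟨t, by simp⟩⟩

theorem finite_setOf_append_singleton_prefix (s t : List ℕ) : {n | s ++ [n] <+: t}.Finite :=
  Subsingleton.finite fun _ hm _ hn => append_singleton_prefix_inj hm hn

theorem exists_cyl_initSeg_subset {O : Set NStar} (hO : IsOpen O) (hb : inf b ∈ O) :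
    ∃ n, cyl (initSeg b n) ⊆ O := by
  induction hO with
  | basic s hs =>
    obtain ⟨t, rfl | rfl | rfl | rfl⟩ := hs
    · simp at hb
    · refine ⟨t.length + 1, ?_⟩
      rintro _ hc rfl
      simpa using (fin_mem_cyl.1 hc).length_le
    · exact ⟨t.length, by rw [prefixFun_iff.1 hb]⟩
    · refine ⟨t.length, fun c hc hct => hb (prefixFun_iff.2 ?_)⟩
      obtain h | h := prefix_or_prefix_of_mem_cyl hc hct
      exacts [h.eq_of_length (by simp), (h.eq_of_length (by simp)).symm]
  | univ => exact ⟨0, subset_univ _⟩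
  | inter s t _ _ ihs iht =>
    obtain ⟨m, hm⟩ := ihs hb.1
    obtain ⟨n, hn⟩ := iht hb.2
    exact ⟨max m n, subset_inter
      ((cyl_anti (initSeg_prefix_initSeg b (le_max_left m n))).trans hm)
      ((cyl_anti (initSeg_prefix_initSeg b (le_max_right m n))).trans hn)⟩
  | sUnion S _ ih =>
    obtain ⟨s, hs, hbs⟩ := hb
    exact (ih s hs hbs).imp fun n hn => hn.trans (subset_sUnion_of_mem hs)

theorem eventually_cyl_append_subset {O : Set NStar} (hO : IsOpen O) (hs : lim s ∈ O) :
    ∀ᶠ n in Filter.cofinite, cyl (s ++ [n]) ⊆ O := by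
  induction hO with
  | basic u hu =>
    obtain ⟨t, rfl | rfl | rfl | rfl⟩ := hu
    · simp at hs
    · filter_upwards [(finite_setOf_append_singleton_prefix s t).compl_mem_cofinite] with n hn
      rintro _ hc rfl
      exact hn hc
    · exact .of_forall fun n => cyl_anti ((lim_mem_cyl.1 hs).trans (List.prefix_append _ _))
    · filter_upwards [(finite_setOf_append_singleton_prefix s t).compl_mem_cofinite]
        with n hn c hc hct
      obtain h | h := prefix_or_prefix_of_mem_cyl hc hct
      · exact hn h
      · obtain rfl | h := List.prefix_concat_iff.1 h
        exacts [hn List.prefix_rfl, hs h]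
  | univ => exact .of_forall fun n => subset_univ _
  | inter _ _ _ _ ih₁ ih₂ =>
    filter_upwards [ih₁ hs.1, ih₂ hs.2] with n h₁ h₂ using subset_inter h₁ h₂
  | sUnion S _ ih =>
    obtain ⟨u, hu, hsu⟩ := hs
    filter_upwards [ih u hu hsu] with n hn using hn.trans (subset_sUnion_of_mem hu)

theorem mem_nhds_fin {O : Set NStar} : O ∈ 𝓝 (fin t) ↔ fin t ∈ O :=
  ⟨mem_of_mem_nhds, fun h => Filter.mem_of_superset
    ((isClopen_singleton_fin t).isOpen.mem_nhds rfl) (singleton_subset_iff.2 h)⟩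

theorem mem_nhds_inf {O : Set NStar} : O ∈ 𝓝 (inf b) ↔ ∃ n, cyl (initSeg b n) ⊆ O := by
  constructor
  · intro hO
    obtain ⟨V, hVO, hV, hb⟩ := mem_nhds_iff.1 hO
    exact (exists_cyl_initSeg_subset hV hb).imp fun n hn => hn.trans hVO
  · rintro ⟨n, hn⟩
    exact Filter.mem_of_superset
      ((isClopen_cyl _).isOpen.mem_nhds (inf_mem_cyl_initSeg b n)) hn

theorem mem_nhds_lim {O : Set NStar} :
    O ∈ 𝓝 (lim t) ↔ lim t ∈ O ∧ ∀ᶠ n in Filter.cofinite, cyl (t ++ [n]) ⊆ O := by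
  constructor
  · intro hO
    obtain ⟨V, hVO, hV, ht⟩ := mem_nhds_iff.1 hO
    refine ⟨hVO ht, ?_⟩
    filter_upwards [eventually_cyl_append_subset hV ht] with n hn using hn.trans hVO
  · rintro ⟨ht, hO⟩
    have hfin : {n | ¬ cyl (t ++ [n]) ⊆ O}.Finite := hO
    have hopen :
        IsOpen ((cyl t \ {fin t}) ∩ ⋂ n ∈ {n | ¬ cyl (t ++ [n]) ⊆ O}, (cyl (t ++ [n]))ᶜ) :=
      ((isClopen_cyl t).diff (isClopen_singleton_fin t)).isOpen.inter
        (hfin.isOpen_biInter fun n _ => (isClopen_cyl _).compl.isOpen)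
    refine Filter.mem_of_superset (hopen.mem_nhds ⟨⟨lim_mem_cyl.2 List.prefix_rfl, by simp⟩, ?_⟩) ?_
    · exact mem_iInter₂.2 fun n _ => not_append_singleton_prefix t n
    · rintro c ⟨⟨hc, hct⟩, hcn⟩
      obtain rfl | rfl | ⟨n, hn⟩ := eq_fin_or_lim_or_mem_cyl hc
      · exact absurd rfl hct
      · exact ht
      · by_contra hcO
        exact mem_iInter₂.1 hcn n (fun h => hcO (h hn)) hn

instance : T2Space NStar := by
  suffices h : ∀ c c' : NStar, c ≠ c' → ∃ U, IsClopen U ∧ ¬ (c ∈ U ↔ c' ∈ U) by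
    refine ⟨fun c c' hne => ?_⟩
    obtain ⟨U, hU, hcU⟩ := h c c' hne
    by_cases hc : c ∈ U
    · exact ⟨U, Uᶜ, hU.isOpen, hU.compl.isOpen, hc, by simp_all, disjoint_compl_right⟩
    · exact ⟨Uᶜ, U, hU.compl.isOpen, hU.isOpen, hc, by simp_all, disjoint_compl_left⟩
  intro c c' hne
  by_contra! h
  have hcol := collapse_eq_collapse_of_forall_mem_cyl_iff fun t => h _ (isClopen_cyl t)
  have hfin (t : List ℕ) : c = fin t ↔ c' = fin t := h _ (isClopen_singleton_fin t)
  cases c <;> cases c' <;> simp_all [collapse]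

theorem ultrafilter_le_nhds_fin_or_lim {U : Ultrafilter NStar} (ht : cyl t ∈ U)
    (hn : ∀ n, cyl (t ++ [n]) ∉ U) : ↑U ≤ 𝓝 (fin t) ∨ ↑U ≤ 𝓝 (lim t) := by
  by_cases hf : {fin t} ∈ U
  · exact Or.inl fun O hO =>
      Filter.mem_of_superset hf (singleton_subset_iff.2 (mem_of_mem_nhds hO))
  right
  intro O hO
  obtain ⟨hlim, hO⟩ := mem_nhds_lim.1 hO
  have hfin : {n | ¬ cyl (t ++ [n]) ⊆ O}.Finite := hO
  have hbad : (⋂ n ∈ {n | ¬ cyl (t ++ [n]) ⊆ O}, (cyl (t ++ [n]))ᶜ) ∈ U :=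
    (Filter.biInter_mem hfin).2 fun n _ => Ultrafilter.compl_mem_iff_notMem.2 (hn n)
  filter_upwards [hbad, Ultrafilter.compl_mem_iff_notMem.2 hf, ht] with c hcn hcf hc
  obtain rfl | rfl | ⟨n, hn⟩ := eq_fin_or_lim_or_mem_cyl hc
  · exact absurd rfl hcf
  · exact hlim
  · by_contra hcO
    exact mem_iInter₂.1 hcn n (fun h => hcO (h hn)) hn

instance : CompactSpace NStar := by
  refine ⟨isCompact_iff_ultrafilter_le_nhds.2 fun U _ => ?_⟩
  by_cases! h : ∃ t, cyl t ∈ U ∧ ∀ n, cyl (t ++ [n]) ∉ U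
  · obtain ⟨t, ht, hn⟩ := h
    obtain h | h := ultrafilter_le_nhds_fin_or_lim ht hn
    exacts [⟨_, mem_univ _, h⟩, ⟨_, mem_univ _, h⟩]
  · obtain ⟨b, hb⟩ := exists_branch
      (Filter.mem_of_superset Filter.univ_mem fun c _ => mem_cyl_nil c) h
    refine ⟨inf b, mem_univ _, fun O hO => ?_⟩
    obtain ⟨n, hn⟩ := mem_nhds_inf.1 hO
    exact Filter.mem_of_superset (hb n) hn

theorem isClosed_setOf_not_isFin : IsClosed {c : NStar | ¬ c.IsFin} := by
  have h : {c : NStar | c.IsFin} = ⋃ t, {fin t} := by ext c; simp [IsFin, eq_comm]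
  exact (h ▸ isOpen_iUnion fun t => (isClopen_singleton_fin t).isOpen :
    IsOpen {c : NStar | c.IsFin}).isClosed_compl

instance : CompactSpace NNStar := isCompact_iff_compactSpace.1 isClosed_setOf_not_isFin.isCompact

end NStar

/-! ## Schemes and tree embeddings -/

section Scheme

open NStar

/-- A scheme of sets `F t`, indexed by finite sequences, that controls `Ψ : ℕ^{≤ℕ}_* → Z`: it makes
`Ψ` continuous, and injective up to identifying `t` with `t⌢⟨∞⟩`. -/
structure Scheme {Z : Type*} [TopologicalSpace Z] (F : List ℕ → Set Z) (Ψ : NStar → Z) : Prop where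
  anti : ∀ t n, F (t ++ [n]) ⊆ F t
  disjoint : ∀ t, Pairwise fun m n => Disjoint (F (t ++ [m])) (F (t ++ [n]))
  fin_mem : ∀ t, Ψ (fin t) ∈ F t
  lim_mem : ∀ t, Ψ (lim t) ∈ F t
  inf_mem : ∀ b n, Ψ (inf b) ∈ F (initSeg b n)
  fin_notMem : ∀ t n, Ψ (fin t) ∉ F (t ++ [n])
  lim_notMem : ∀ t n, Ψ (lim t) ∉ F (t ++ [n])
  lim_conv : ∀ t, ∀ O ∈ 𝓝 (Ψ (lim t)), ∀ᶠ n in Filter.cofinite, F (t ++ [n]) ⊆ O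
  inf_conv : ∀ b, ∀ O ∈ 𝓝 (Ψ (inf b)), ∃ n, F (initSeg b n) ⊆ O

namespace Scheme

variable {Z : Type*} [TopologicalSpace Z] {F : List ℕ → Set Z} {Ψ : NStar → Z}

theorem mem_of_mem_cyl (S : Scheme F Ψ) {t : List ℕ} {c : NStar} (h : c ∈ cyl t) : Ψ c ∈ F t := by
  cases c with
  | fin u => exact antitone_of_append_singleton_subset S.anti h (S.fin_mem u)
  | lim u => exact antitone_of_append_singleton_subset S.anti h (S.lim_mem u)
  | inf b => exact prefixFun_iff.1 h ▸ S.inf_mem b t.length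

theorem mem_iff_mem_cyl (S : Scheme F Ψ) {t : List ℕ} {c : NStar} : Ψ c ∈ F t ↔ c ∈ cyl t := by
  refine ⟨fun h => ?_, S.mem_of_mem_cyl⟩
  induction t using List.reverseRecOn with
  | nil => exact mem_cyl_nil c
  | append_singleton t n ih =>
    obtain rfl | rfl | ⟨m, hm⟩ := eq_fin_or_lim_or_mem_cyl (ih (S.anti t n h))
    · exact absurd h (S.fin_notMem t n)
    · exact absurd h (S.lim_notMem t n)
    · obtain rfl : m = n := by
        by_contra hmn
        exact disjoint_left.1 (S.disjoint t hmn) (S.mem_of_mem_cyl hm) h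
      exact hm

theorem factorsThrough_collapse (S : Scheme F Ψ) : Function.FactorsThrough collapse Ψ :=
  fun _ _ h => collapse_eq_collapse_of_forall_mem_cyl_iff fun _ => by
    rw [← S.mem_iff_mem_cyl, h, S.mem_iff_mem_cyl]

theorem continuous (S : Scheme F Ψ) : Continuous Ψ := by
  rw [continuous_iff_continuousAt]
  intro c O hO
  rw [Filter.mem_map]
  cases c with
  | fin u => exact mem_nhds_fin.2 (mem_preimage.2 (mem_of_mem_nhds hO))
  | lim u =>
    refine mem_nhds_lim.2 ⟨mem_preimage.2 (mem_of_mem_nhds hO), ?_⟩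
    filter_upwards [S.lim_conv u O hO] with n hn c hc using hn (S.mem_of_mem_cyl hc)
  | inf b =>
    obtain ⟨n, hn⟩ := S.inf_conv b O hO
    exact mem_nhds_inf.2 ⟨n, fun c hc => hn (S.mem_of_mem_cyl hc)⟩

end Scheme

end Scheme

/-- A map `k` of the tree of finite sequences into itself that sends the immediate successors of
each `t` above distinct immediate successors of `k t`. -/
def TreeEmbedding (k : List ℕ → List ℕ) : Prop :=
  ∀ t, ∃ m : ℕ → ℕ, Function.Injective m ∧ ∀ n, k t ++ [m n] <+: k (t ++ [n])

/-- A map of the tree of finite sequences into itself that sends each proper extension of `t` to a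
proper extension of `k t`. Unlike a `TreeEmbedding` it may send incompatible nodes to compatible
ones. -/
def ProperlyExtending (k : List ℕ → List ℕ) : Prop :=
  ∀ t n, k t <+: k (t ++ [n]) ∧ (k t).length < (k (t ++ [n])).length

namespace ProperlyExtending

variable {k : List ℕ → List ℕ}

theorem prefix_of_prefix (hk : ProperlyExtending k) {s t : List ℕ} (h : s <+: t) : k s <+: k t :=
  antitone_of_append_singleton_subset (F := fun t => {u | k t <+: u})
    (fun t n _ hu => (hk t n).1.trans hu) h List.prefix_rfl

theorem le_length_initSeg (hk : ProperlyExtending k) (b : ℕ → ℕ) (n : ℕ) :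
    n ≤ (k (initSeg b n)).length := by
  induction n with
  | zero => exact Nat.zero_le _
  | succ n ih => exact initSeg_succ b n ▸ ih.trans_lt (hk _ _).2

theorem prefixFun_limSeq (hk : ProperlyExtending k) (b : ℕ → ℕ) (n : ℕ) :
    PrefixFun (k (initSeg b n)) (limSeq k b) := by
  intro i hi
  have hi' : i < (k (initSeg b (i + 1))).length := hk.le_length_initSeg b (i + 1)
  have hlim : limSeq k b i = (k (initSeg b (i + 1)))[i] := List.getD_eq_getElem _ _ hi'
  rw [hlim, List.get_eq_getElem]
  rcases le_total n (i + 1) with hn | hn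
  · exact (hk.prefix_of_prefix (initSeg_prefix_initSeg b hn)).getElem hi
  · exact ((hk.prefix_of_prefix (initSeg_prefix_initSeg b hn)).getElem hi').symm

theorem initSeg_limSeq_prefix (hk : ProperlyExtending k) (b : ℕ → ℕ) (n : ℕ) :
    initSeg (limSeq k b) n <+: k (initSeg b n) :=
  (hk.prefixFun_limSeq b n).initSeg_prefix (hk.le_length_initSeg b n)

theorem eq_limSeq (hk : ProperlyExtending k) {b c : ℕ → ℕ}
    (hc : ∀ n, PrefixFun (k (initSeg b n)) c) : c = limSeq k b :=
  eq_of_forall_prefixFun_initSeg fun n =>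
    .of_prefix ((hc n).initSeg_prefix (hk.le_length_initSeg b n)) (hk.prefixFun_limSeq b n)

end ProperlyExtending

theorem NStar.hat_collapse (k : List ℕ → List ℕ) (c : NStar) :
    NStar.hat k c.collapse = (NStar.hat k c).collapse := by
  cases c <;> rfl

namespace TreeEmbedding

variable {k k' : List ℕ → List ℕ}

theorem properlyExtending (hk : TreeEmbedding k) : ProperlyExtending k := by
  intro t n
  obtain ⟨m, -, hm⟩ := hk t
  exact ⟨(List.prefix_append _ _).trans (hm n), by simpa [Nat.succ_le_iff] using (hm n).length_le⟩

theorem comp (hk : TreeEmbedding k) (hk' : TreeEmbedding k') : TreeEmbedding (k ∘ k') := by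
  intro t
  obtain ⟨m', hm', h'⟩ := hk' t
  obtain ⟨m, hm, h⟩ := hk (k' t)
  exact ⟨m ∘ m', hm.comp hm', fun n =>
    (h (m' n)).trans (hk.properlyExtending.prefix_of_prefix (h' n))⟩

theorem limSeq_comp (hk : TreeEmbedding k) (hk' : TreeEmbedding k') :
    limSeq (k ∘ k') = limSeq k ∘ limSeq k' := by
  funext b
  refine ((hk.comp hk').properlyExtending.eq_limSeq fun n => ?_).symm
  have hn := prefixFun_iff.1 (hk'.properlyExtending.prefixFun_limSeq b n)
  simpa only [Function.comp_apply, hn] using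
    hk.properlyExtending.prefixFun_limSeq (limSeq k' b) (k' (initSeg b n)).length

open NStar in
theorem scheme (hk : TreeEmbedding k) : Scheme (fun t => cyl (k t)) (NStar.hat k) where
  anti t n := cyl_anti ((hk.properlyExtending t n).1)
  disjoint t i j hij := by
    obtain ⟨m, hm, h⟩ := hk t
    refine disjoint_left.2 fun c hi hj => hij (hm ?_)
    obtain h' | h' := prefix_or_prefix_of_mem_cyl (cyl_anti (h i) hi) (cyl_anti (h j) hj)
    · exact append_singleton_prefix_inj h' List.prefix_rfl
    · exact append_singleton_prefix_inj List.prefix_rfl h'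
  fin_mem _ := fin_mem_cyl.2 List.prefix_rfl
  lim_mem _ := lim_mem_cyl.2 List.prefix_rfl
  inf_mem := hk.properlyExtending.prefixFun_limSeq
  fin_notMem t n h := (hk.properlyExtending t n).2.not_ge (fin_mem_cyl.1 h).length_le
  lim_notMem t n h := (hk.properlyExtending t n).2.not_ge (lim_mem_cyl.1 h).length_le
  lim_conv t O hO := by
    obtain ⟨m, hm, h⟩ := hk t
    filter_upwards [hm.tendsto_cofinite.eventually (mem_nhds_lim.1 hO).2] with n hn
      using (cyl_anti (h n)).trans hn
  inf_conv b O hO := by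
    obtain ⟨n, hn⟩ := mem_nhds_inf.1 hO
    exact ⟨n, (cyl_anti (hk.properlyExtending.initSeg_limSeq_prefix b n)).trans hn⟩

theorem injective_hat (hk : TreeEmbedding k) : Function.Injective (NStar.hat k) := by
  intro c c' h
  have hcol := hk.scheme.factorsThrough_collapse h
  cases c <;> cases c' <;> simp_all [NStar.collapse, NStar.hat]

theorem injective (hk : TreeEmbedding k) : Function.Injective k := fun s t h =>
  NStar.fin.inj (hk.injective_hat (a₁ := .fin s) (a₂ := .fin t) (congrArg NStar.fin h))

theorem continuous_hatNN (hk : TreeEmbedding k) : Continuous (hatNN k) :=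
  (hk.scheme.continuous.comp continuous_subtype_val).subtype_mk _

theorem injective_hatNN (hk : TreeEmbedding k) : Function.Injective (hatNN k) :=
  fun _ _ h => Subtype.ext (hk.injective_hat (congrArg Subtype.val h))

end TreeEmbedding

theorem isEmbedding_inf : IsEmbedding NStar.inf := by
  refine ⟨⟨ext_iff_nhds.2 fun b => ?_⟩, fun b c h => by simpa using h⟩
  rw [nhds_induced]
  ext O
  rw [Filter.mem_comap]
  constructor
  · intro hO
    obtain ⟨n, hn⟩ := exists_seqCyl_initSeg_subset hO
    exact ⟨_, NStar.mem_nhds_inf.2 ⟨n, Subset.rfl⟩, hn⟩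
  · rintro ⟨V, hV, hVO⟩
    obtain ⟨n, hn⟩ := NStar.mem_nhds_inf.1 hV
    exact Filter.mem_of_superset ((isOpen_seqCyl _).mem_nhds (prefixFun_initSeg b n))
      fun c hc => hVO (hn hc)

theorem isEmbedding_infPt : IsEmbedding infPt :=
  isEmbedding_inf.codRestrict {c | ¬ c.IsFin} _

theorem TreeEmbedding.continuous_limSeq {k : List ℕ → List ℕ} (hk : TreeEmbedding k) :
    Continuous (limSeq k) :=
  isEmbedding_inf.continuous_iff.2 (hk.scheme.continuous.comp isEmbedding_inf.continuous)

/-! ## Tree embeddings into dense sets of nodes -/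

/-- Every extension of `s` has an extension in `D`. -/
def DenseAbove (D : Set (List ℕ)) (s : List ℕ) : Prop := ∀ t, s <+: t → ∃ d ∈ D, t <+: d

theorem not_denseAbove_iff {D : Set (List ℕ)} {s : List ℕ} :
    ¬ DenseAbove D s ↔ ∃ t, s <+: t ∧ ∀ u ∈ D, ¬ t <+: u := by
  simp only [DenseAbove, not_forall, not_exists, not_and, exists_prop]

theorem DenseAbove.of_prefix {D : Set (List ℕ)} {s t : List ℕ} (h : DenseAbove D s)
    (hst : s <+: t) : DenseAbove D t := fun u hu => h u (hst.trans hu)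

theorem exists_seqCyl_subset_of_dense {O : Set (ℕ → ℕ)} (hO : IsOpen O) (hd : Dense O)
    (t : List ℕ) : ∃ u, t <+: u ∧ seqCyl u ⊆ O := by
  obtain ⟨b, hbt, hbO⟩ := hd.inter_open_nonempty _ (isOpen_seqCyl t) (nonempty_seqCyl t)
  obtain ⟨n, hn⟩ := exists_seqCyl_initSeg_subset (hO.mem_nhds hbO)
  exact ⟨initSeg b (max n t.length), PrefixFun.prefix_initSeg hbt (le_max_right _ _),
    (seqCyl_anti (initSeg_prefix_initSeg b (le_max_left _ _))).trans hn⟩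

theorem DenseAbove.exists_treeEmbedding {D : Set (List ℕ)} {s : List ℕ} (hD : DenseAbove D s)
    {G : Set (ℕ → ℕ)} (hG : G ∈ residual (ℕ → ℕ)) :
    ∃ k, TreeEmbedding k ∧ (∀ t, k t ∈ D ∧ s <+: k t) ∧ ∀ b, limSeq k b ∈ G := by
  obtain ⟨G', hG'G, hG', hdense⟩ := mem_residual.1 hG
  obtain ⟨O, hO, rfl⟩ := isGδ_iff_eq_iInter_nat.1 hG'
  have hOd (j : ℕ) : Dense (O j) := hdense.mono (iInter_subset O j)
  obtain ⟨u, hu⟩ := hD s List.prefix_rfl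
  obtain ⟨k, -, hkD, hk⟩ := exists_tree (P := fun u => u ∈ D ∧ s <+: u)
    (R := fun j u q => ∀ n, u ++ [n] <+: q n ∧ seqCyl (q n) ⊆ O j) hu fun j u hu => by
      have h (n : ℕ) : ∃ v, (v ∈ D ∧ s <+: v) ∧ u ++ [n] <+: v ∧ seqCyl v ⊆ O j := by
        obtain ⟨v, hv, hvO⟩ := exists_seqCyl_subset_of_dense (hO j) (hOd j) (u ++ [n])
        have hsv : s <+: v := (hu.2.trans (List.prefix_append _ _)).trans hv
        obtain ⟨d, hd, hvd⟩ := hD v hsv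
        exact ⟨d, ⟨hd, hsv.trans hvd⟩, hv.trans hvd, (seqCyl_anti hvd).trans hvO⟩
      choose q hqD hq using h
      exact ⟨q, hqD, hq⟩
  have hkt : TreeEmbedding k := fun t => ⟨id, Function.injective_id, fun n => (hk t n).1⟩
  refine ⟨k, hkt, hkD, fun b => hG'G (mem_iInter.2 fun j => ?_)⟩
  have h : seqCyl (k (initSeg b j ++ [b j])) ⊆ O (initSeg b j).length := (hk _ _).2
  rw [length_initSeg, ← initSeg_succ] at h
  exact h (hkt.properlyExtending.prefixFun_limSeq b (j + 1))

theorem exists_treeEmbedding_forall_mem_or_forall_notMem (E : Set (List ℕ)) :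
    ∃ k, TreeEmbedding k ∧ ((∀ t, k t ∈ E) ∨ ∀ t, k t ∉ E) := by
  by_cases h : DenseAbove E []
  · obtain ⟨k, hk, hkE, -⟩ := h.exists_treeEmbedding Filter.univ_mem
    exact ⟨k, hk, Or.inl fun t => (hkE t).1⟩
  · obtain ⟨s, -, hs⟩ := not_denseAbove_iff.1 h
    have hs' : DenseAbove Eᶜ s := fun t ht => ⟨t, fun h => hs t h ht, List.prefix_rfl⟩
    obtain ⟨k, hk, hkE, -⟩ := hs'.exists_treeEmbedding Filter.univ_mem
    exact ⟨k, hk, Or.inr fun t => (hkE t).1⟩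

/-! ## A Hurewicz-type theorem -/

theorem exists_strictMono_pairwise_disjoint {Z : Type*} [TopologicalSpace Z] {A : ℕ → Set Z} {x : Z}
    (hA : ∀ n, IsClosed (A n)) (hx : ∀ n, x ∉ A n)
    (hlim : ∀ O ∈ 𝓝 x, ∀ᶠ n in Filter.atTop, A n ⊆ O) :
    ∃ g : ℕ → ℕ, StrictMono g ∧ Pairwise fun m n => Disjoint (A (g m)) (A (g n)) := by
  obtain ⟨g, -, hg⟩ := exists_seq_of_forall_finset_exists (fun _ : ℕ => True)
    (fun i j => i < j ∧ Disjoint (A i) (A j)) fun s _ => by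
      have hO : (⋂ i ∈ s, (A i)ᶜ) ∈ 𝓝 x :=
        (Filter.biInter_finset_mem s).2 fun i _ => (hA i).isOpen_compl.mem_nhds (hx i)
      have hgt : ∀ᶠ n in Filter.atTop, ∀ i ∈ s, i < n :=
        (Filter.eventually_all_finset s).2 fun i _ => Filter.eventually_gt_atTop i
      obtain ⟨n, hn, hnO⟩ := (hgt.and (hlim _ hO)).exists
      exact ⟨n, trivial, fun i hi => ⟨hn i hi, disjoint_left.2 fun y hyi hyn =>
        mem_iInter₂.1 (hnO hyn) i hi hyi⟩⟩
  exact ⟨g, fun m n h => (hg m n h).1,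
    (pairwise_disjoint_on _).2 fun m n h => (hg m n h).2⟩

/-- `A` is separated from `B` by an `Fσ` set: it is covered by countably many closed sets
disjoint from `B`. -/
def FsigmaSeparated {X : Type*} [TopologicalSpace X] (A B : Set X) : Prop :=
  ∃ S : Set (Set X), S.Countable ∧ (∀ F ∈ S, IsClosed F ∧ Disjoint F B) ∧ A ⊆ ⋃₀ S

namespace FsigmaSeparated

variable {X : Type*} [TopologicalSpace X] {A A' B : Set X}

theorem mono (h : FsigmaSeparated A B) (hA : A' ⊆ A) : FsigmaSeparated A' B :=
  h.imp fun _ ⟨hS, hSB, hAS⟩ => ⟨hS, hSB, hA.trans hAS⟩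

theorem of_isClosed (hA : IsClosed A) (hAB : Disjoint A B) : FsigmaSeparated A B :=
  ⟨{A}, countable_singleton A, by simp [hA, hAB], by simp⟩

theorem iUnion {ι : Type*} [Countable ι] {A : ι → Set X} (h : ∀ i, FsigmaSeparated (A i) B) :
    FsigmaSeparated (⋃ i, A i) B := by
  choose S hS hSB hAS using h
  refine ⟨⋃ i, S i, countable_iUnion hS, fun F hF => ?_,
    iUnion_subset fun i => (hAS i).trans (sUnion_subset_sUnion (subset_iUnion S i))⟩
  obtain ⟨i, hi⟩ := mem_iUnion.1 hF
  exact hSB i F hi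

theorem union (h : FsigmaSeparated A B) (h' : FsigmaSeparated A' B) :
    FsigmaSeparated (A ∪ A') B := by
  rw [union_eq_iUnion]
  exact iUnion (by rintro (_ | _); exacts [h', h])

end FsigmaSeparated

section Hurewicz

variable {X : Type*} [TopologicalSpace X]

/-- The finite sequences `s` for which the image under `f` of the infinite sequences extending `s`
is not separated from `B` by an `Fσ` set. -/
def largeNodes (f : (ℕ → ℕ) → X) (B : Set X) : Set (List ℕ) :=
  {s | ¬ FsigmaSeparated (f '' seqCyl s) B}

/-- The infinite sequences all of whose initial segments are in `largeNodes f B`. -/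
def largeBranches (f : (ℕ → ℕ) → X) (B : Set X) : Set (ℕ → ℕ) :=
  {a | ∀ n, initSeg a n ∈ largeNodes f B}

/-- The closure of the image under `f` of the infinite sequences extending `s` all of whose initial
segments are in `largeNodes f B`. -/
def largeImage (f : (ℕ → ℕ) → X) (B : Set X) (s : List ℕ) : Set X :=
  closure (f '' (seqCyl s ∩ largeBranches f B))

variable {f : (ℕ → ℕ) → X} {B : Set X} {s t : List ℕ}

theorem mem_largeNodes_of_prefix (h : s <+: t) (ht : t ∈ largeNodes f B) : s ∈ largeNodes f B :=
  fun hs => ht (hs.mono (image_mono (seqCyl_anti h)))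

theorem largeImage_anti (h : s <+: t) : largeImage f B t ⊆ largeImage f B s :=
  closure_mono (image_mono (inter_subset_inter_left _ (seqCyl_anti h)))

theorem exists_mem_largeImage (hs : s ∈ largeNodes f B) : ∃ x ∈ B, x ∈ largeImage f B s := by
  by_contra! h
  have hclosed : FsigmaSeparated (largeImage f B s) B :=
    .of_isClosed isClosed_closure (disjoint_right.2 h)
  have hsmall : FsigmaSeparated (⋃ u : ↥(largeNodes f B)ᶜ, f '' seqCyl u.1) B :=
    .iUnion fun u => not_not.1 u.2
  refine hs ((hclosed.union hsmall).mono ?_)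
  rintro _ ⟨b, hb, rfl⟩
  by_cases hbL : b ∈ largeBranches f B
  · exact Or.inl (subset_closure ⟨b, ⟨hb, hbL⟩, rfl⟩)
  · obtain ⟨n, hn⟩ := not_forall.1 hbL
    exact Or.inr (mem_iUnion.2 ⟨⟨initSeg b n, hn⟩, b, prefixFun_initSeg b n, rfl⟩)

theorem exists_largeImage_subset [T3Space X] (hf : Continuous f) {x : X} (hxf : x ∉ range f)
    (hx : x ∈ largeImage f B s) {O : Set X} (hO : O ∈ 𝓝 x) :
    ∃ q, (s <+: q ∧ s.length < q.length ∧ q ∈ largeNodes f B ∧ x ∉ largeImage f B q) ∧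
      largeImage f B q ⊆ O := by
  obtain ⟨_, hfO, a, ⟨has, haL⟩, rfl⟩ := mem_closure_iff_nhds.1 hx _ (interior_mem_nhds.2 hO)
  have hW : {x}ᶜ ∩ interior O ∈ 𝓝 (f a) :=
    Filter.inter_mem (isOpen_compl_singleton.mem_nhds fun h => hxf ⟨a, h⟩)
      (isOpen_interior.mem_nhds hfO)
  obtain ⟨W, hWa, hWclosed, hWO⟩ := exists_mem_nhds_isClosed_subset hW
  obtain ⟨l, hl⟩ := exists_seqCyl_initSeg_subset (hf.continuousAt hWa)
  let q := initSeg a (max l (s.length + 1))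
  have hqW : largeImage f B q ⊆ W := closure_minimal (image_subset_iff.2 fun b hb =>
    hl (seqCyl_anti (initSeg_prefix_initSeg a (le_max_left _ _)) hb.1)) hWclosed
  refine ⟨q, ⟨PrefixFun.prefix_initSeg has (by omega), by simp [q], haL _, ?_⟩,
    hqW.trans (hWO.trans (inter_subset_right.trans interior_subset))⟩
  exact fun h => (hWO (hqW h)).1 rfl

/-- A step of the construction of the scheme of large images below `s`: the sets
`largeImage f B (q n)` lie in `largeImage f B s`, are pairwise disjoint, and converge to the point
`x` of `largeImage f B s ∩ B`, which none of them contains. -/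
structure LargeImageSplitting (f : (ℕ → ℕ) → X) (B : Set X) (s : List ℕ) (q : ℕ → List ℕ)
    (x : X) : Prop where
  mem : x ∈ B
  mem_largeImage : x ∈ largeImage f B s
  prefix_lt (n : ℕ) : s <+: q n ∧ s.length < (q n).length
  notMem (n : ℕ) : x ∉ largeImage f B (q n)
  disjoint : Pairwise fun m n => Disjoint (largeImage f B (q m)) (largeImage f B (q n))
  conv : ∀ O ∈ 𝓝 x, ∀ᶠ n in Filter.cofinite, largeImage f B (q n) ⊆ O

theorem exists_largeImageSplitting [T3Space X] [FirstCountableTopology X] (hf : Continuous f)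
    (hfB : Disjoint (range f) B) (hs : s ∈ largeNodes f B) :
    ∃ q : ℕ → List ℕ, (∀ n, q n ∈ largeNodes f B) ∧ ∃ x, LargeImageSplitting f B s q x := by
  obtain ⟨x, hxB, hx⟩ := exists_mem_largeImage hs
  obtain ⟨U, hU⟩ := (𝓝 x).exists_antitone_basis
  choose q hq hqU using fun n =>
    exists_largeImage_subset hf (disjoint_right.1 hfB hxB) hx (hU.mem n)
  have hlim : ∀ O ∈ 𝓝 x, ∀ᶠ n in Filter.atTop, largeImage f B (q n) ⊆ O := fun O hO => by
    obtain ⟨m, hm⟩ := hU.mem_iff.1 hO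
    filter_upwards [Filter.eventually_ge_atTop m] with n hn
      using (hqU n).trans ((hU.antitone hn).trans hm)
  obtain ⟨g, hg, hgd⟩ :=
    exists_strictMono_pairwise_disjoint (fun n => isClosed_closure) (fun n => (hq n).2.2.2) hlim
  refine ⟨q ∘ g, fun n => (hq _).2.2.1, x, hxB, hx, fun n => ⟨(hq _).1, (hq _).2.1⟩,
    fun n => (hq _).2.2.2, hgd, fun O hO => ?_⟩
  exact Nat.cofinite_eq_atTop ▸ hg.tendsto_atTop.eventually (hlim O hO)

/-- The function on `ℕ^{≤ℕ}_*` given by `w`, `x` and `z` on finite sequences, on finite sequences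
followed by `∞`, and on infinite sequences. -/
def NStar.elim {Z : Type*} (w x : List ℕ → Z) (z : (ℕ → ℕ) → Z) : NStar → Z
  | fin t => w t
  | lim t => x t
  | inf b => z b

theorem exists_scheme_largeImage [T3Space X] [FirstCountableTopology X] (hf : Continuous f)
    (hfB : Disjoint (range f) B) (hsep : ¬ FsigmaSeparated (range f) B) :
    ∃ (k : List ℕ → List ℕ) (Ψ : NStar → X), Scheme (fun t => largeImage f B (k t)) Ψ ∧
      (∀ b, Ψ (.inf b) ∈ range f) ∧ ∀ t, Ψ (.lim t) ∈ B := by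
  have hnil : [] ∈ largeNodes f B := fun h =>
    hsep (by rwa [seqCyl_nil, image_univ] at h)
  obtain ⟨k, -, hkL, hk⟩ := exists_tree (R := fun _ s q => ∃ x, LargeImageSplitting f B s q x)
    hnil fun _ s hs => exists_largeImageSplitting hf hfB hs
  choose x hx using hk
  have hkp : ProperlyExtending k := fun t n => (hx t).prefix_lt n
  have hkb (b : ℕ → ℕ) : limSeq k b ∈ largeBranches f B := fun n =>
    mem_largeNodes_of_prefix (hkp.initSeg_limSeq_prefix b n) (hkL _)
  refine ⟨k, NStar.elim x x (f ∘ limSeq k), ?_, fun b => ⟨_, rfl⟩, fun t => (hx t).mem⟩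
  exact {
    anti := fun t n => largeImage_anti (hkp t n).1
    disjoint := fun t => (hx t).disjoint
    fin_mem := fun t => (hx t).mem_largeImage
    lim_mem := fun t => (hx t).mem_largeImage
    inf_mem := fun b n => subset_closure ⟨_, ⟨hkp.prefixFun_limSeq b n, hkb b⟩, rfl⟩
    fin_notMem := fun t => (hx t).notMem
    lim_notMem := fun t => (hx t).notMem
    lim_conv := fun t => (hx t).conv
    inf_conv := fun b O hO => by
      obtain ⟨W, hWb, hW, hWO⟩ := exists_mem_nhds_isClosed_subset hO
      obtain ⟨n, hn⟩ := exists_seqCyl_initSeg_subset (hf.continuousAt hWb)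
      exact ⟨n, (closure_minimal (image_subset_iff.2 fun a ha =>
        hn (seqCyl_anti (hkp.initSeg_limSeq_prefix b n) ha.1)) hW).trans hWO⟩ }

theorem exists_injective_of_not_fsigmaSeparated [T3Space X] [FirstCountableTopology X]
    (hf : Continuous f) (hfB : Disjoint (range f) B) (hsep : ¬ FsigmaSeparated (range f) B) :
    ∃ h : NNStar → X, Continuous h ∧ Function.Injective h ∧
      (∀ b, h (infPt b) ∈ range f) ∧ ∀ t, h (limPt t).toNN ∈ B := by
  obtain ⟨k, Ψ, hΨ, hinf, hlim⟩ := exists_scheme_largeImage hf hfB hsep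
  exact ⟨fun c => Ψ c.1, hΨ.continuous.comp continuous_subtype_val,
    NStar.injective_nnStar_of_factorsThrough hΨ.factorsThrough_collapse, hinf, hlim⟩

end Hurewicz

/-! ## Limit extensions of maps on the tree -/

theorem DenseAbove.exists_inter_of_subset_biUnion {ι : Type*} {I : Set ι} (hI : I.Finite)
    {E : ι → Set (List ℕ)} {D : Set (List ℕ)} {s : List ℕ} (hD : DenseAbove D s)
    (hDE : D ⊆ ⋃ i ∈ I, E i) : ∃ i ∈ I, ∃ t, s <+: t ∧ DenseAbove (D ∩ E i) t := by
  induction I, hI using Set.Finite.induction_on generalizing D s with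
  | empty =>
    obtain ⟨d, hd, -⟩ := hD s List.prefix_rfl
    simpa using hDE hd
  | @insert a I _ _ ih =>
    by_cases h : DenseAbove (D ∩ E a) s
    · exact ⟨a, mem_insert _ _, s, List.prefix_rfl, h⟩
    · obtain ⟨t, hst, ht⟩ := not_denseAbove_iff.1 h
      have hDt : DenseAbove (D ∩ {d | t <+: d}) t := fun u hu => by
        obtain ⟨d, hd, hud⟩ := hD u (hst.trans hu)
        exact ⟨d, ⟨hd, hu.trans hud⟩, hud⟩
      obtain ⟨i, hi, t', htt', h'⟩ := ih hDt fun d hd => by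
        have := hDE hd.1
        rw [biUnion_insert] at this
        exact this.resolve_left fun hda => ht d ⟨hd.1, hda⟩ hd.2
      refine ⟨i, mem_insert_of_mem _ hi, t', hst.trans htt', fun u hu => ?_⟩
      obtain ⟨d, hd, hud⟩ := h' u hu
      exact ⟨d, ⟨hd.1.1, hd.2⟩, hud⟩

/-- `D` is a set of extensions of `s` that meets the extensions of every extension of `s`. -/
def DenseInCone (D : Set (List ℕ)) (s : List ℕ) : Prop := DenseAbove D s ∧ ∀ d ∈ D, s <+: d

theorem DenseAbove.denseInCone {D : Set (List ℕ)} {s : List ℕ} (h : DenseAbove D s) :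
    DenseInCone (D ∩ {d | s <+: d}) s :=
  ⟨fun u hu => (h u hu).imp fun _ ⟨hd, hud⟩ => ⟨⟨hd, hu.trans hud⟩, hud⟩, fun _ hd => hd.2⟩

namespace DenseInCone

variable {D : Set (List ℕ)} {s t : List ℕ}

theorem univ_nil : DenseInCone univ [] :=
  ⟨fun t _ => ⟨t, mem_univ t, List.prefix_rfl⟩, fun _ _ => List.nil_prefix⟩

theorem nonempty (h : DenseInCone D s) : D.Nonempty :=
  (h.1 s List.prefix_rfl).imp fun _ hd => hd.1

theorem inter_of_prefix (h : DenseInCone D s) (hst : s <+: t) :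
    DenseInCone (D ∩ {d | t <+: d}) t :=
  (h.1.of_prefix hst).denseInCone

end DenseInCone

theorem eventually_subset_of_tendsto_diam {Q : Type*} [PseudoMetricSpace Q] [CompactSpace Q]
    {A : ℕ → Set Q} {l : ℕ → Q} {y : Q} (hl : ∀ n, l n ∈ A n)
    (hly : Filter.Tendsto l Filter.atTop (𝓝 y))
    (hA : Filter.Tendsto (fun n => Metric.diam (A n)) Filter.atTop (𝓝 0)) {O : Set Q}
    (hO : O ∈ 𝓝 y) : ∀ᶠ n in Filter.atTop, A n ⊆ O := by
  obtain ⟨δ, hδ, hδO⟩ := Metric.nhds_basis_ball.mem_iff.1 hO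
  filter_upwards [hA.eventually (gt_mem_nhds (half_pos hδ)),
    hly.eventually (Metric.ball_mem_nhds y (half_pos hδ))] with n hn hln a ha
  have hal := Metric.dist_le_diam_of_mem (Metric.isBounded_of_compactSpace (s := A n)) ha (hl n)
  refine hδO (Metric.mem_ball.2 ?_)
  linarith [dist_triangle a (l n) y, Metric.mem_ball.1 hln]

/-- No point is a limit, above every finite sequence, of values of `η`. -/
def NowhereClustering {Q : Type*} [TopologicalSpace Q] (η : List ℕ → Q) : Prop :=
  ∀ y s, ∃ t, s <+: t ∧ y ∉ closure (η '' {d | t <+: d})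

theorem NowhereClustering.exists_notMem_closure {Q : Type*} [TopologicalSpace Q] {η : List ℕ → Q}
    (hη : NowhereClustering η) {D : Set (List ℕ)} {s : List ℕ} (hD : DenseInCone D s) (y z : Q) :
    ∃ E t, s <+: t ∧ E ⊆ D ∧ DenseInCone E t ∧
      y ∉ closure (η '' E) ∧ z ∉ closure (η '' E) := by
  obtain ⟨t, hst, hy⟩ := hη y s
  obtain ⟨u, htu, hz⟩ := hη z t
  refine ⟨D ∩ {d | u <+: d}, u, hst.trans htu, inter_subset_left,
    hD.inter_of_prefix (hst.trans htu), fun h => hy ?_, fun h => hz ?_⟩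
  · exact closure_mono (image_mono fun d hd => htu.trans hd.2) h
  · exact closure_mono (image_mono inter_subset_right) h

section LimitExtension

variable {Q : Type*} [PseudoMetricSpace Q] [CompactSpace Q] {η : List ℕ → Q}

theorem DenseInCone.exists_diam_le {D : Set (List ℕ)} {s : List ℕ} (hD : DenseInCone D s)
    (η : List ℕ → Q) {ε : ℝ} (hε : 0 < ε) :
    ∃ E t, s <+: t ∧ E ⊆ D ∧ DenseInCone E t ∧ Metric.diam (closure (η '' E)) ≤ ε := by
  obtain ⟨I, -, hI, hcover⟩ :=
    finite_cover_balls_of_compact (isCompact_univ (X := Q)) (half_pos hε)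
  obtain ⟨i, -, t, hst, ht⟩ := hD.1.exists_inter_of_subset_biUnion hI
    (E := fun i => η ⁻¹' Metric.ball i (ε / 2)) fun d _ => by simpa using hcover (mem_univ (η d))
  refine ⟨_, t, hst, inter_subset_left.trans inter_subset_left, ht.denseInCone, ?_⟩
  rw [Metric.diam_closure]
  have hball : η '' (D ∩ η ⁻¹' Metric.ball i (ε / 2) ∩ {d | t <+: d}) ⊆
      Metric.closedBall i (ε / 2) :=
    image_subset_iff.2 fun d hd => Metric.ball_subset_closedBall hd.1.2
  linarith [Metric.diam_le_of_subset_closedBall (half_pos hε).le hball]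

/-- A step of the construction of a limit extension of `η`. Here `p` is a pair consisting of a set
`D` of nodes and a node `s`. The sets `closure (η '' E)`, for the pairs `(E, t)` in the sequence
`q`, lie in `closure (η '' D)`, are small and pairwise disjoint, converge to `y`, and avoid both `y`
and `η x`. -/
structure ClosureSplitting (η : List ℕ → Q) (ε : ℝ) (p : Set (List ℕ) × List ℕ)
    (q : ℕ → Set (List ℕ) × List ℕ) (x : List ℕ) (y : Q) (m : ℕ → ℕ) : Prop where
  mem : x ∈ p.1
  mem_closure : y ∈ closure (η '' p.1)
  injective : Function.Injective m
  append_prefix (n : ℕ) : x ++ [m n] <+: (q n).2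
  subset (n : ℕ) : (q n).1 ⊆ p.1
  diam_le (n : ℕ) : Metric.diam (closure (η '' (q n).1)) ≤ ε
  fin_notMem (n : ℕ) : η x ∉ closure (η '' (q n).1)
  lim_notMem (n : ℕ) : y ∉ closure (η '' (q n).1)
  disjoint : Pairwise fun i j => Disjoint (closure (η '' (q i).1)) (closure (η '' (q j).1))
  conv : ∀ O ∈ 𝓝 y, ∀ᶠ n in Filter.cofinite, closure (η '' (q n).1) ⊆ O

theorem DenseInCone.exists_tendsto_diam {D : Set (List ℕ)} {s x : List ℕ} (hD : DenseInCone D s)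
    (hx : x ∈ D) (η : List ℕ → Q) {ε : ℝ} (hε : 0 < ε) :
    ∃ E : ℕ → Set (List ℕ), ∃ t : ℕ → List ℕ, (∀ n, x ++ [n] <+: t n ∧ E n ⊆ D ∧
        DenseInCone (E n) (t n) ∧ Metric.diam (closure (η '' E n)) ≤ ε) ∧
      Filter.Tendsto (fun n => Metric.diam (closure (η '' E n))) Filter.atTop (𝓝 0) := by
  choose E t hxt hED hE hdiam using fun n : ℕ =>
    (hD.inter_of_prefix ((hD.2 x hx).trans (List.prefix_append x [n]))).exists_diam_le η
      (lt_min hε (Nat.one_div_pos_of_nat (n := n)))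
  refine ⟨E, t, fun n => ⟨hxt n, (hED n).trans inter_subset_left, hE n,
    (hdiam n).trans (min_le_left _ _)⟩, ?_⟩
  exact squeeze_zero (fun _ => Metric.diam_nonneg) (fun n => (hdiam n).trans (min_le_right _ _))
    tendsto_one_div_add_atTop_nhds_zero_nat

theorem NowhereClustering.exists_closureSplitting (hη : NowhereClustering η) {D : Set (List ℕ)}
    {s : List ℕ} (hD : DenseInCone D s) {ε : ℝ} (hε : 0 < ε) :
    ∃ q, (∀ n, DenseInCone (q n).1 (q n).2) ∧ ∃ x y m, ClosureSplitting η ε (D, s) q x y m := by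
  obtain ⟨x, hx⟩ := hD.nonempty
  obtain ⟨E, t, hE, hEdiam⟩ := hD.exists_tendsto_diam hx η hε
  choose l hl using fun n => (hE n).2.2.1.nonempty
  obtain ⟨y, g, hg, hgy⟩ := CompactSpace.tendsto_subseq fun n => η (l n)
  have hy : y ∈ closure (η '' D) :=
    mem_closure_of_tendsto hgy (.of_forall fun n => ⟨_, (hE _).2.1 (hl _), rfl⟩)
  choose E' t' htt' hEE' hE' hyE' hxE' using fun n =>
    hη.exists_notMem_closure (hE (g n)).2.2.1 y (η x)
  have hsub (n : ℕ) : closure (η '' E' n) ⊆ closure (η '' E (g n)) :=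
    closure_mono (image_mono (hEE' n))
  have hconv : ∀ O ∈ 𝓝 y, ∀ᶠ n in Filter.atTop, closure (η '' E' n) ⊆ O := fun O hO => by
    filter_upwards [eventually_subset_of_tendsto_diam
      (fun n => subset_closure (mem_image_of_mem η (hl (g n)))) hgy
      (hEdiam.comp hg.tendsto_atTop) hO] with n hn using (hsub n).trans hn
  obtain ⟨g', hg', hdisj⟩ :=
    exists_strictMono_pairwise_disjoint (fun n => isClosed_closure) hyE' hconv
  refine ⟨fun n => (E' (g' n), t' (g' n)), fun n => hE' _, x, y, g ∘ g', ?_⟩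
  exact {
    mem := hx
    mem_closure := hy
    injective := hg.injective.comp hg'.injective
    append_prefix := fun n => (hE _).1.trans (htt' _)
    subset := fun n => (hEE' _).trans (hE _).2.1
    diam_le := fun n =>
      (Metric.diam_mono (hsub _) Metric.isBounded_of_compactSpace).trans (hE _).2.2.2
    fin_notMem := fun n => hxE' _
    lim_notMem := fun n => hyE' _
    disjoint := hdisj
    conv := fun O hO =>
      Nat.cofinite_eq_atTop ▸ hg'.tendsto_atTop.eventually (hconv O hO) }

/-- `Ψ` is a continuous extension of `η` to `ℕ^{≤ℕ}_*` that is injective up to identifying `t` with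
`t⌢⟨∞⟩`. -/
structure IsLimitExtension {Q : Type*} [TopologicalSpace Q] (η : List ℕ → Q) (Ψ : NStar → Q) :
    Prop where
  apply_fin (t : List ℕ) : Ψ (.fin t) = η t
  continuous : Continuous Ψ
  factorsThrough_collapse : Function.FactorsThrough NStar.collapse Ψ

theorem NowhereClustering.exists_isLimitExtension (hη : NowhereClustering η) :
    ∃ k, TreeEmbedding k ∧ ∃ Ψ, IsLimitExtension (η ∘ k) Ψ := by
  obtain ⟨p, -, hp, hstep⟩ := exists_tree (a := (univ, [])) (P := fun p => DenseInCone p.1 p.2)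
    (R := fun j p q => ∃ x y m, ClosureSplitting η (1 / ((j : ℝ) + 1)) p q x y m)
    DenseInCone.univ_nil fun j _ hD => hη.exists_closureSplitting hD Nat.one_div_pos_of_nat
  choose k y m hk using hstep
  have hk_tree : TreeEmbedding k := fun t => ⟨m t, (hk t).injective, fun n =>
    ((hk t).append_prefix n).trans ((hp _).2 _ (hk _).mem)⟩
  let F (t : List ℕ) : Set Q := closure (η '' (p t).1)
  have hanti (t : List ℕ) (n : ℕ) : F (t ++ [n]) ⊆ F t :=
    closure_mono (image_mono ((hk t).subset n))
  have hfin (t : List ℕ) : η (k t) ∈ F t := subset_closure ⟨_, (hk t).mem, rfl⟩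
  have hz (b : ℕ → ℕ) : (⋂ n, F (initSeg b n)).Nonempty :=
    IsCompact.nonempty_iInter_of_sequence_nonempty_isCompact_isClosed _
      (fun n => initSeg_succ b n ▸ hanti _ _) (fun n => ⟨_, hfin _⟩) isClosed_closure.isCompact
      fun n => isClosed_closure
  choose z hz using hz
  have hS : Scheme F (NStar.elim (η ∘ k) y z) := {
    anti := hanti
    disjoint := fun t => (hk t).disjoint
    fin_mem := hfin
    lim_mem := fun t => (hk t).mem_closure
    inf_mem := fun b => mem_iInter.1 (hz b)
    fin_notMem := fun t => (hk t).fin_notMem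
    lim_notMem := fun t => (hk t).lim_notMem
    lim_conv := fun t => (hk t).conv
    inf_conv := fun b O hO => by
      obtain ⟨ε, hε, hεO⟩ := Metric.nhds_basis_closedBall.mem_iff.1 hO
      obtain ⟨n, hn⟩ := exists_nat_one_div_lt hε
      have hdiam : Metric.diam (F (initSeg b (n + 1))) ≤ 1 / ((n : ℝ) + 1) := by
        simpa [F, initSeg_succ] using (hk (initSeg b n)).diam_le (b n)
      exact ⟨n + 1, fun a ha => hεO ((Metric.dist_le_diam_of_mem
        Metric.isBounded_of_compactSpace ha (mem_iInter.1 (hz b) _)).trans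
          (hdiam.trans hn.le))⟩ }
  exact ⟨k, hk_tree, _, fun _ => rfl, hS.continuous, hS.factorsThrough_collapse⟩

end LimitExtension

theorem IsLimitExtension.comp_treeEmbedding {Q : Type*} [TopologicalSpace Q] {η : List ℕ → Q}
    {Ψ : NStar → Q} (h : IsLimitExtension η Ψ) {k : List ℕ → List ℕ} (hk : TreeEmbedding k) :
    IsLimitExtension (η ∘ k) (Ψ ∘ NStar.hat k) where
  apply_fin t := h.apply_fin (k t)
  continuous := h.continuous.comp hk.scheme.continuous
  factorsThrough_collapse _ _ h' := hk.injective_hat (by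
    simpa only [NStar.hat_collapse] using h.factorsThrough_collapse h')

/-! ## The Baire property of analytic sets -/

section NonmeagreLocus

variable {X : Type*} [TopologicalSpace X] {A : Set X}

/-- The points near which `A` is nonmeagre. -/
def nonmeagreLocus (A : Set X) : Set X := {x | ∀ U ∈ 𝓝 x, ¬ IsMeagre (A ∩ U)}

theorem isClosed_nonmeagreLocus (A : Set X) : IsClosed (nonmeagreLocus A) := by
  refine isOpen_compl_iff.1 (isOpen_iff_mem_nhds.2 fun x hx => ?_)
  simp only [nonmeagreLocus, mem_compl_iff, mem_ofPred_eq, not_forall, not_not] at hx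
  obtain ⟨U, hU, hAU⟩ := hx
  filter_upwards [eventually_mem_nhds_iff.2 hU] with y hy h using h U hy hAU

theorem nonmeagreLocus_subset_closure {O : Set X} (h : A ≤ᶠ[residual X] O) :
    nonmeagreLocus A ⊆ closure O := by
  intro x hx
  by_contra hxO
  refine hx _ (isClosed_closure.isOpen_compl.mem_nhds hxO) ?_
  filter_upwards [h] with y hy hyA using hyA.2 (subset_closure (hy hyA.1))

theorem eventuallyLE_nonmeagreLocus [SecondCountableTopology X] (A : Set X) :
    A ≤ᶠ[residual X] nonmeagreLocus A := by
  have hsmall : ∀ᶠ x in residual X, ∀ V : {V : countableBasis X // IsMeagre (A ∩ V)},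
      x ∉ A ∩ V.1 := by
    have := (countable_countableBasis X).to_subtype
    exact eventually_countable_forall.2 fun V => V.2
  filter_upwards [hsmall] with x hx hxA U hU hAU
  obtain ⟨V, hV, hxV, hVU⟩ := (isBasis_countableBasis X).mem_nhds_iff.1 hU
  exact hx ⟨⟨V, hV⟩, hAU.mono (inter_subset_inter_right A hVU)⟩ ⟨hxA, hxV⟩

theorem eventuallyLE_interior_of_isClosed {C : Set X} (hC : IsClosed C) :
    C ≤ᶠ[residual X] interior C := by
  have h := (closure_residualEq hC.isOpen_compl.isLocallyClosed).le
  rw [interior_eq_compl_closure_compl]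
  filter_upwards [h] with x hx hxC hx' using hx hx' hxC

theorem nonmeagreLocus_eventuallyLE_iUnion [SecondCountableTopology X] {ι : Type*} [Countable ι]
    {B : ι → Set X} (h : A ⊆ ⋃ i, B i) :
    nonmeagreLocus A ≤ᶠ[residual X] ⋃ i, nonmeagreLocus (B i) := by
  let O : Set X := ⋃ i, interior (nonmeagreLocus (B i))
  have hO : IsOpen O := isOpen_iUnion fun i => isOpen_interior
  have hAO : A ≤ᶠ[residual X] O :=
    h.eventuallyLE.trans (.countable_iUnion fun i => (eventuallyLE_nonmeagreLocus (B i)).trans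
      (eventuallyLE_interior_of_isClosed (isClosed_nonmeagreLocus (B i))))
  have hO_closure : closure O ≤ᶠ[residual X] O := (closure_residualEq hO.isLocallyClosed).le
  exact (nonmeagreLocus_subset_closure hAO).eventuallyLE.trans
    (hO_closure.trans (iUnion_mono fun i => interior_subset).eventuallyLE)

theorem eq_of_forall_mem_closure_image_seqCyl [T2Space X] {f : (ℕ → ℕ) → X} (hf : Continuous f)
    {x : X} {b : ℕ → ℕ} (h : ∀ n, x ∈ closure (f '' seqCyl (initSeg b n))) : f b = x := by
  by_contra hne
  obtain ⟨U, V, hU, hV, hbU, hxV, hUV⟩ := t2_separation hne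
  obtain ⟨n, hn⟩ := exists_seqCyl_initSeg_subset (hf.continuousAt (hU.mem_nhds hbU))
  obtain ⟨y, hyV, hy⟩ := mem_closure_iff.1 (h n) V hV hxV
  exact disjoint_left.1 hUV (image_subset_iff.2 hn hy) hyV

theorem baireMeasurableSet_of_analyticSet [T2Space X] [SecondCountableTopology X] {S : Set X}
    (hS : MeasureTheory.AnalyticSet S) : BaireMeasurableSet S := by
  rw [MeasureTheory.AnalyticSet] at hS
  obtain rfl | ⟨f, hf, rfl⟩ := hS
  · exact isOpen_empty.baireMeasurableSet
  let E (u : List ℕ) : Set X := nonmeagreLocus (f '' seqCyl u)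
  have hE : ∀ᶠ x in residual X, ∀ u, x ∈ E u → ∃ n, x ∈ E (u ++ [n]) := by
    refine eventually_countable_forall.2 fun u => ?_
    have hcover : f '' seqCyl u ⊆ ⋃ n, f '' seqCyl (u ++ [n]) := by
      rintro _ ⟨b, hb, rfl⟩
      exact mem_iUnion.2 ⟨_, b, PrefixFun.append_singleton hb, rfl⟩
    filter_upwards [nonmeagreLocus_eventuallyLE_iUnion hcover] with x hx hxu
      using mem_iUnion.1 (hx hxu)
  have hE_range : E [] ≤ᶠ[residual X] range f := by
    filter_upwards [hE] with x hx hxE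
    obtain ⟨b, hb⟩ := exists_branch (P := fun u => x ∈ E u) hxE hx
    exact ⟨b, eq_of_forall_mem_closure_image_seqCyl hf fun n =>
      nonmeagreLocus_subset_closure Filter.EventuallyLE.rfl (hb n)⟩
  have hrange_E : range f ≤ᶠ[residual X] E [] := by
    simpa only [E, seqCyl_nil, image_univ] using eventuallyLE_nonmeagreLocus (range f)
  exact (isClosed_nonmeagreLocus _).isOpen_compl.baireMeasurableSet.of_compl.congr
    (hE_range.antisymm hrange_E)

end NonmeagreLocus

theorem denseAbove_univ (s : List ℕ) : DenseAbove univ s :=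
  fun t _ => ⟨t, mem_univ t, List.prefix_rfl⟩

theorem exists_treeEmbedding_of_baireMeasurableSet {S : Set (ℕ → ℕ)} (hS : BaireMeasurableSet S) :
    ∃ k, TreeEmbedding k ∧ ((∀ b, limSeq k b ∈ S) ∨ ∀ b, limSeq k b ∉ S) := by
  obtain ⟨U, hU, hSU⟩ := hS.residualEq_isOpen
  obtain rfl | ⟨b, hb⟩ := U.eq_empty_or_nonempty
  · obtain ⟨k, hk, -, hkS⟩ := (denseAbove_univ []).exists_treeEmbedding hSU.mem_iff
    exact ⟨k, hk, Or.inr fun b => (hkS b).1⟩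
  · obtain ⟨n, hn⟩ := exists_seqCyl_initSeg_subset (hU.mem_nhds hb)
    obtain ⟨k, hk, hkb, hkS⟩ := (denseAbove_univ (initSeg b n)).exists_treeEmbedding hSU.mem_iff
    exact ⟨k, hk, Or.inl fun c => (hkS c).2 (hn (PrefixFun.of_prefix (hkb _).2
      (hk.properlyExtending.prefixFun_limSeq c 0)))⟩

theorem exists_treeEmbedding_homogeneous (E L : Set (List ℕ)) {S : Set (ℕ → ℕ)}
    (hS : BaireMeasurableSet S) :
    ∃ k, TreeEmbedding k ∧ ((∀ t, k t ∈ E) ∨ ∀ t, k t ∉ E) ∧ ((∀ t, k t ∈ L) ∨ ∀ t, k t ∉ L) ∧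
      ((∀ b, limSeq k b ∈ S) ∨ ∀ b, limSeq k b ∉ S) := by
  obtain ⟨k₁, hk₁, hS₁⟩ := exists_treeEmbedding_of_baireMeasurableSet hS
  obtain ⟨k₂, hk₂, hE₂⟩ := exists_treeEmbedding_forall_mem_or_forall_notMem (k₁ ⁻¹' E)
  obtain ⟨k₃, hk₃, hL₃⟩ := exists_treeEmbedding_forall_mem_or_forall_notMem (k₁ ∘ k₂ ⁻¹' L)
  refine ⟨k₁ ∘ k₂ ∘ k₃, hk₁.comp (hk₂.comp hk₃), ?_, hL₃, ?_⟩
  · exact hE₂.imp (fun h t => h (k₃ t)) fun h t => h (k₃ t)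
  · rw [hk₁.limSeq_comp (hk₂.comp hk₃)]
    exact hS₁.imp (fun h b => h _) fun h b => h _

theorem BorelFun.exists_treeEmbedding_continuous {Z : Type*} [TopologicalSpace Z]
    [SecondCountableTopology Z] {θ : (ℕ → ℕ) → Z} (hθ : BorelFun θ) :
    ∃ k, TreeEmbedding k ∧ Continuous (θ ∘ limSeq k) := by
  have : Countable (countableBasis Z) := (countable_countableBasis Z).to_subtype
  have hopen (V : countableBasis Z) : ∃ U : Set (ℕ → ℕ), IsOpen U ∧ θ ⁻¹' V =ᵇ U := by
    borelize (ℕ → ℕ)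
    exact (hθ V (isOpen_of_mem_countableBasis V.2)).residualEq_isOpen
  choose U hU hθU using hopen
  obtain ⟨k, hk, -, hkU⟩ := (denseAbove_univ []).exists_treeEmbedding
    (countable_iInter_mem.2 fun V => (hθU V).mem_iff)
  refine ⟨k, hk, (isBasis_countableBasis Z).continuous_iff.2 fun V hV => ?_⟩
  have hpre : θ ∘ limSeq k ⁻¹' V = limSeq k ⁻¹' U ⟨V, hV⟩ :=
    ext fun b => mem_iInter.1 (hkU b) ⟨V, hV⟩
  exact hpre ▸ (hU _).preimage hk.continuous_limSeq

/-! ## Factorizations through closed embeddings -/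

theorem exists_isClosedEmbedding_of_range_eq_preimage {M Q A Z : Type*} [TopologicalSpace M]
    [TopologicalSpace Q] [TopologicalSpace A] [TopologicalSpace Z] [CompactSpace M] [T2Space Q]
    {y : M → Q} (hy : Continuous y) (hyi : Function.Injective y) {e : Z → Q} (he : IsEmbedding e)
    {j : A → M} (hj : IsEmbedding j) (hr : range j = y ⁻¹' range e) :
    ∃ a : A → Z, IsClosedEmbedding a ∧ ∀ z, e (a z) = y (j z) := by
  have hje (z : A) : y (j z) ∈ range e := mem_preimage.1 (hr ▸ mem_range_self z)
  choose a ha using hje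
  have hyj : IsEmbedding (e ∘ a) := by
    rw [show e ∘ a = y ∘ j from funext ha]
    exact (hy.isClosedEmbedding hyi).isEmbedding.comp hj
  have hrange : range a = e ⁻¹' range y := by
    refine Subset.antisymm (range_subset_iff.2 fun z => ⟨j z, (ha z).symm⟩) ?_
    rintro w ⟨m, hm⟩
    obtain ⟨z, rfl⟩ : m ∈ range j := hr ▸ ⟨w, hm.symm⟩
    exact ⟨z, he.injective ((ha z).trans hm)⟩
  refine ⟨a, ⟨.of_comp (he.continuous_iff.2 hyj.continuous) he.continuous hyj, ?_⟩, ha⟩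
  exact hrange ▸ (isCompact_range hy).isClosed.preimage he.continuous

/-- `θ` is the composition of `f` with a closed embedding. -/
def ClosedFactorization {I A Z : Type*} [TopologicalSpace A] [TopologicalSpace Z] (f : I → A)
    (θ : I → Z) : Prop :=
  ∃ a : A → Z, IsClosedEmbedding a ∧ ∀ i, θ i = a (f i)

namespace ClosedFactorization

variable {I A Z : Type*} [TopologicalSpace A] [TopologicalSpace Z]

theorem of_subsingleton [T1Space Z] [Subsingleton A] {θ : I → Z} (h : ∃ z, ∀ i, θ i = z)
    (f : I → A) : ClosedFactorization f θ := by
  obtain ⟨z, hz⟩ := h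
  have hclosed : IsClosedMap fun _ : A => z := fun s _ =>
    (subsingleton_of_subsingleton.image _).isClosed
  exact ⟨fun _ => z, .of_continuous_injective_isClosedMap continuous_const
    (Function.injective_of_subsingleton _) hclosed, hz⟩

theorem of_compactSpace {M Q : Type*} [TopologicalSpace M] [TopologicalSpace Q] [CompactSpace M]
    [T2Space Q] {y : M → Q} (hy : Continuous y) (hyi : Function.Injective y) {e : Z → Q}
    (he : IsEmbedding e) {j : A → M} (hj : IsEmbedding j) (hr : range j = y ⁻¹' range e)
    {f : I → A} {θ : I → Z} (h : ∀ i, y (j (f i)) = e (θ i)) : ClosedFactorization f θ := by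
  obtain ⟨a, ha, haj⟩ := exists_isClosedEmbedding_of_range_eq_preimage hy hyi he hj hr
  exact ⟨a, ha, fun i => he.injective (by rw [haj, h])⟩

theorem comp_right {J : Type*} {f : I → A} {θ : I → Z} (h : ClosedFactorization f θ) (r : J → I) :
    ClosedFactorization (f ∘ r) (θ ∘ r) :=
  let ⟨a, ha, haf⟩ := h
  ⟨a, ha, fun i => haf (r i)⟩

theorem trans {B : Type*} [TopologicalSpace B] {f : I → A} {g : I → B} {θ : I → Z}
    (hf : ClosedFactorization f g) (hg : ClosedFactorization g θ) : ClosedFactorization f θ :=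
  let ⟨a, ha, haf⟩ := hf
  let ⟨b, hb, hbg⟩ := hg
  ⟨b ∘ a, hb.comp ha, fun i => by rw [hbg, haf, Function.comp_apply]⟩

end ClosedFactorization

theorem range_infPt : range infPt = {c : NNStar | c.1.IsInf} := by
  ext ⟨c, hc⟩
  exact exists_congr fun b => Subtype.ext_iff.trans eq_comm

theorem TreeEmbedding.isClosedEmbedding_limSeq {k : List ℕ → List ℕ} (hk : TreeEmbedding k) :
    IsClosedEmbedding (limSeq k) := by
  obtain ⟨a, ha, hak⟩ : ClosedFactorization id (limSeq k) :=
    .of_compactSpace hk.continuous_hatNN hk.injective_hatNN isEmbedding_infPt isEmbedding_infPt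
      (by
        rw [range_infPt]
        simp [Set.ext_iff, NStar.forall_iff, NStar.IsInf, NStar.IsFin, hatNN, NStar.hat])
      fun _ => rfl
  exact (funext hak : limSeq k = a) ▸ ha

/-! ## Normal forms on Baire space -/

/-- `θ` factors through one of the three maps `f1`, `f2`, `f3` on `ℕ^ℕ` by a closed embedding.
Constancy stands for the factorization through `f1`, whose codomain lives in an arbitrary
universe. -/
inductive BranchNormalForm {Z : Type*} [TopologicalSpace Z] (θ : (ℕ → ℕ) → Z) : Prop
  | const (h : ∃ z, ∀ b, θ b = z)
  | inf (h : ClosedFactorization f2 θ)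
  | infLim (h : ClosedFactorization f3 θ)

theorem BranchNormalForm.comp_limSeq {Z : Type*} [TopologicalSpace Z] {θ : (ℕ → ℕ) → Z}
    (h : BranchNormalForm θ) {k : List ℕ → List ℕ} (hk : TreeEmbedding k) :
    BranchNormalForm (θ ∘ limSeq k) := by
  have h2 : ClosedFactorization f2 (f2 ∘ limSeq k) :=
    ⟨_, hk.isClosedEmbedding_limSeq, fun _ => rfl⟩
  have h3 : ClosedFactorization f3 (f3 ∘ limSeq k) :=
    ⟨_, hk.continuous_hatNN.isClosedEmbedding hk.injective_hatNN, fun _ => rfl⟩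
  match h with
  | .const ⟨z, hz⟩ => exact .const ⟨z, fun b => hz _⟩
  | .inf h => exact .inf (h2.trans (h.comp_right _))
  | .infLim h => exact .infLim (h3.trans (h.comp_right _))

theorem tendsto_fin_initSeg (b : ℕ → ℕ) :
    Filter.Tendsto (fun n => NStar.fin (initSeg b n)) Filter.atTop (𝓝 (.inf b)) := fun O hO => by
  obtain ⟨n, hn⟩ := NStar.mem_nhds_inf.1 hO
  rw [Filter.mem_map]
  filter_upwards [Filter.Ici_mem_atTop n] with m hm
    using hn (NStar.fin_mem_cyl.2 (initSeg_prefix_initSeg b hm))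

theorem ProperlyExtending.tendsto_limSeq {k : List ℕ → List ℕ} (hk : ProperlyExtending k)
    {b : ℕ → ℕ} {x : ℕ → ℕ → ℕ} (hx : ∀ n, x n ∈ seqCyl (k (initSeg b n))) :
    Filter.Tendsto x Filter.atTop (𝓝 (limSeq k b)) := fun O hO => by
  obtain ⟨n, hn⟩ := exists_seqCyl_initSeg_subset hO
  rw [Filter.mem_map]
  filter_upwards [Filter.Ici_mem_atTop n] with m hm using
    hn (seqCyl_anti ((initSeg_prefix_initSeg _ hm).trans (hk.initSeg_limSeq_prefix b m)) (hx m))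

theorem IsLimitExtension.apply_inf {Q : Type*} [TopologicalSpace Q] [T2Space Q] {θ : (ℕ → ℕ) → Q}
    (hθ : Continuous θ) {x : List ℕ → ℕ → ℕ} (hx : ∀ t, x t ∈ seqCyl t) {k : List ℕ → List ℕ}
    (hk : ProperlyExtending k) {Ψ : NStar → Q} (h : IsLimitExtension (θ ∘ x ∘ k) Ψ) (b : ℕ → ℕ) :
    Ψ (.inf b) = θ (limSeq k b) := by
  have hΨ := (h.continuous.tendsto (.inf b)).comp (tendsto_fin_initSeg b)
  have hθ' := (hθ.tendsto (limSeq k b)).comp (hk.tendsto_limSeq fun n => hx (k (initSeg b n)))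
  exact tendsto_nhds_unique hΨ (hθ'.congr fun n => (h.apply_fin _).symm)

theorem nowhereClustering_comp {Q : Type*} [TopologicalSpace Q] [T2Space Q] {θ : (ℕ → ℕ) → Q}
    (hθ : Continuous θ) (hne : ∀ s y, ∃ b ∈ seqCyl s, θ b ≠ y) {x : List ℕ → ℕ → ℕ}
    (hx : ∀ t, x t ∈ seqCyl t) : NowhereClustering (θ ∘ x) := fun y s => by
  obtain ⟨b, hb, hby⟩ := hne s y
  obtain ⟨U, V, hU, hV, hbU, hyV, hUV⟩ := t2_separation hby
  obtain ⟨n, hn⟩ := exists_seqCyl_initSeg_subset ((hU.preimage hθ).mem_nhds hbU)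
  refine ⟨initSeg b (max n s.length), PrefixFun.prefix_initSeg hb (le_max_right _ _), fun hy => ?_⟩
  obtain ⟨_, hdV, d, hd, rfl⟩ := mem_closure_iff.1 hy V hV hyV
  exact disjoint_left.1 hUV
    (hn (seqCyl_anti ((initSeg_prefix_initSeg b (le_max_left _ _)).trans hd) (hx d))) hdV

theorem exists_treeEmbedding_limSeq_mem_seqCyl (s : List ℕ) :
    ∃ k, TreeEmbedding k ∧ ∀ b, limSeq k b ∈ seqCyl s := by
  obtain ⟨k, hk, hks, -⟩ := (denseAbove_univ s).exists_treeEmbedding Filter.univ_mem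
  exact ⟨k, hk, fun b => PrefixFun.of_prefix (hks _).2
    (hk.properlyExtending.prefixFun_limSeq b 0)⟩

theorem IsLimitExtension.branchNormalForm {Q Z : Type*} [TopologicalSpace Q] [T2Space Q]
    [TopologicalSpace Z] {η : List ℕ → Q} {Ψ : NStar → Q} (h : IsLimitExtension η Ψ) {e : Z → Q}
    (he : IsEmbedding e) {θ : (ℕ → ℕ) → Z} (hθ : ∀ b, Ψ (.inf b) = e (θ b))
    (hlim : (∀ t, Ψ (.lim t) ∈ range e) ∨ ∀ t, Ψ (.lim t) ∉ range e) : BranchNormalForm θ := by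
  have hΨ : Continuous fun c : NNStar => Ψ c.1 := h.continuous.comp continuous_subtype_val
  have hΨi := NStar.injective_nnStar_of_factorsThrough h.factorsThrough_collapse
  have hinf (b : ℕ → ℕ) : Ψ (.inf b) ∈ range e := ⟨θ b, (hθ b).symm⟩
  rcases hlim with hlim | hlim
  · refine .infLim (.of_compactSpace hΨ hΨi he .id ?_ hθ)
    simpa [-mem_range, Set.ext_iff, NStar.forall_iff, NStar.IsFin] using ⟨hlim, hinf⟩
  · refine .inf (.of_compactSpace hΨ hΨi he isEmbedding_infPt ?_ hθ)
    rw [range_infPt]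
    simpa [-mem_range, Set.ext_iff, NStar.forall_iff, NStar.IsFin, NStar.IsInf]
      using ⟨hlim, hinf⟩

theorem exists_isEmbedding_hilbertCube (Z : Type*) [TopologicalSpace Z] [MetrizableSpace Z]
    [SeparableSpace Z] : ∃ e : Z → ℕ → unitInterval, IsEmbedding e :=
  let := metrizableSpaceMetric Z
  Metric.PiNatEmbed.exists_embedding_to_hilbert_cube

theorem BorelFun.exists_branchNormalForm {Z : Type*} [TopologicalSpace Z] [MetrizableSpace Z]
    [SecondCountableTopology Z] {θ : (ℕ → ℕ) → Z} (hθ : BorelFun θ) :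
    ∃ k, TreeEmbedding k ∧ BranchNormalForm (θ ∘ limSeq k) := by
  obtain ⟨k₀, hk₀, hθ₀⟩ := hθ.exists_treeEmbedding_continuous
  suffices ∃ k, TreeEmbedding k ∧ BranchNormalForm (θ ∘ limSeq k₀ ∘ limSeq k) by
    obtain ⟨k, hk, h⟩ := this
    exact ⟨k₀ ∘ k, hk₀.comp hk, hk₀.limSeq_comp hk ▸ h⟩
  by_cases hconst : ∃ s z, ∀ b ∈ seqCyl s, (θ ∘ limSeq k₀) b = z
  · obtain ⟨s, z, hz⟩ := hconst
    obtain ⟨k, hk, hks⟩ := exists_treeEmbedding_limSeq_mem_seqCyl s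
    exact ⟨k, hk, .const ⟨z, fun b => hz _ (hks b)⟩⟩
  push Not at hconst
  obtain ⟨e, he⟩ := exists_isEmbedding_hilbertCube Z
  have hne (s y) : ∃ b ∈ seqCyl s, (e ∘ θ ∘ limSeq k₀) b ≠ y := by
    by_cases hy : y ∈ range e
    · obtain ⟨z, rfl⟩ := hy
      exact (hconst s z).imp fun b ⟨hb, hbz⟩ => ⟨hb, he.injective.ne hbz⟩
    · exact (nonempty_seqCyl s).imp fun b hb => ⟨hb, fun h => hy ⟨_, h⟩⟩
  choose x hx using nonempty_seqCyl
  let := pseudoMetrizableSpacePseudoMetric (ℕ → unitInterval)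
  obtain ⟨k₁, hk₁, Ψ, hΨ⟩ := (nowhereClustering_comp (he.continuous.comp hθ₀) hne
    hx).exists_isLimitExtension
  obtain ⟨k₂, hk₂, hlim⟩ := exists_treeEmbedding_forall_mem_or_forall_notMem
    {t | Ψ (.lim t) ∈ range e}
  refine ⟨k₁ ∘ k₂, hk₁.comp hk₂, (hΨ.comp_treeEmbedding hk₂).branchNormalForm he (fun b => ?_) hlim⟩
  rw [hk₁.limSeq_comp hk₂]
  exact hΨ.apply_inf (he.continuous.comp hθ₀) hx hk₁.properlyExtending (limSeq k₂ b)

/-! ## Analytic spaces -/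

namespace IsAnalytic

variable {X Y : Type*} [TopologicalSpace X] [TopologicalSpace Y]

theorem separableSpace (hX : IsAnalytic X) : SeparableSpace X :=
  let ⟨_, _, _, hf, hfs⟩ := hX
  hfs.denseRange.separableSpace hf

theorem of_isClosed (hX : IsAnalytic X) {D : Set X} (hD : IsClosed D) : IsAnalytic D := by
  obtain ⟨C, hC, f, hf, hfs⟩ := hX
  have hE : IsClosed (Subtype.val '' (f ⁻¹' D)) :=
    hC.isClosedEmbedding_subtypeVal.isClosedMap _ (hD.preimage hf)
  let E : f ⁻¹' D ≃ₜ Subtype.val '' (f ⁻¹' D) := IsEmbedding.subtypeVal.homeomorphImage (f ⁻¹' D)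
  exact ⟨_, hE, D.restrictPreimage f ∘ E.symm, hf.restrictPreimage.comp E.symm.continuous,
    (hfs.restrictPreimage D).comp E.symm.surjective⟩

theorem analyticSet_of_measurableSet (hX : IsAnalytic X) {S : Set X}
    (hS : @MeasurableSet X (borel X) S) : MeasureTheory.AnalyticSet S := by
  obtain ⟨C, hC, f, hf, hfs⟩ := hX
  have := hC.polishSpace
  borelize ↥C X
  exact image_preimage_eq S hfs ▸ (hf.measurable hS).analyticSet.image_of_continuous hf

theorem analyticSet_range (hX : IsAnalytic X) {f : X → Y} (hf : Continuous f) :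
    MeasureTheory.AnalyticSet (range f) :=
  image_univ ▸ (hX.analyticSet_of_measurableSet .univ).image_of_continuous hf

end IsAnalytic

/-! ## Normal forms on the tree -/

/-- `θ`, transported to the points `t⌢⟨∞⟩`, factors through one of the eight maps `g1`, …, `g8` by a
closed embedding. Constancy stands for the factorization through `g1`, whose codomain lives in an
arbitrary universe. -/
inductive NodeNormalForm {Z : Type*} [TopologicalSpace Z] (θ : List ℕ → Z) : Prop
  | const (h : ∃ z, ∀ t, θ t = z)
  | lim (h : ClosedFactorization (g2 ∘ limPt) θ)
  | infLim (h : ClosedFactorization (g3 ∘ limPt) θ)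
  | fin (h : ClosedFactorization (g4 ∘ limPt) θ)
  | onePoint (h : ClosedFactorization (g5 ∘ limPt) θ)
  | finLim (h : ClosedFactorization (g6 ∘ limPt) θ)
  | finInf (h : ClosedFactorization (g7 ∘ limPt) θ)
  | finInfLim (h : ClosedFactorization (g8 ∘ limPt) θ)

theorem isEmbedding_toNN : IsEmbedding NLim.toNN :=
  .of_comp (continuous_subtype_val.subtype_mk _) continuous_subtype_val .subtypeVal

theorem range_toNN : range NLim.toNN = {c : NNStar | c.1.IsLim} :=
  ext fun c => ⟨by rintro ⟨c, rfl⟩; exact c.2, fun h => ⟨⟨c.1, h⟩, rfl⟩⟩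

theorem IsLimitExtension.injective {Q : Type*} [TopologicalSpace Q] {η : List ℕ → Q} {Ψ : NStar → Q}
    (h : IsLimitExtension η Ψ) (hne : ∀ t, Ψ (.lim t) ≠ Ψ (.fin t)) :
    Function.Injective Ψ := fun c c' hc => by
  have hcol := h.factorsThrough_collapse hc
  have hne' (t : List ℕ) : Ψ (.fin t) ≠ Ψ (.lim t) := (hne t).symm
  cases c <;> cases c' <;> simp_all [NStar.collapse]

section LimitNormalForm

open NStar

variable {Q Z : Type*} [TopologicalSpace Q] [T2Space Q] [TopologicalSpace Z] {θ : List ℕ → Z}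
  {e : Z → Q} {Ψ : NStar → Q}

theorem IsLimitExtension.nodeNormalForm_of_lim_eq_fin (h : IsLimitExtension (e ∘ θ) Ψ)
    (he : IsEmbedding e) (hlim : ∀ t, Ψ (lim t) = Ψ (fin t))
    (hinf : (∀ b, Ψ (inf b) ∈ range e) ∨ ∀ b, Ψ (inf b) ∉ range e) : NodeNormalForm θ := by
  have hΨ : Continuous fun c : NNStar => Ψ c.1 := h.continuous.comp continuous_subtype_val
  have hΨi := injective_nnStar_of_factorsThrough h.factorsThrough_collapse
  have hθ (t : List ℕ) : Ψ (lim t) = e (θ t) := (hlim t).trans (h.apply_fin t)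
  have hrange (t : List ℕ) : Ψ (lim t) ∈ range e := ⟨θ t, (hθ t).symm⟩
  rcases hinf with hinf | hinf
  · have hr : range id = (fun c : NNStar => Ψ c.1) ⁻¹' range e := by
      simpa [-mem_range, Set.ext_iff, forall_iff, IsFin] using ⟨hrange, hinf⟩
    exact .infLim (.of_compactSpace hΨ hΨi he .id hr hθ)
  · have hr : range NLim.toNN = (fun c : NNStar => Ψ c.1) ⁻¹' range e := by
      rw [range_toNN]
      simpa [-mem_range, Set.ext_iff, forall_iff, IsFin, IsLim] using ⟨hrange, hinf⟩
    exact .lim (.of_compactSpace hΨ hΨi he isEmbedding_toNN hr hθ)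

theorem IsLimitExtension.nodeNormalForm_of_lim_ne_fin (h : IsLimitExtension (e ∘ θ) Ψ)
    (he : IsEmbedding e) (hne : ∀ t, Ψ (lim t) ≠ Ψ (fin t))
    (hlim : (∀ t, Ψ (lim t) ∈ range e) ∨ ∀ t, Ψ (lim t) ∉ range e)
    (hinf : (∀ b, Ψ (inf b) ∈ range e) ∨ ∀ b, Ψ (inf b) ∉ range e) : NodeNormalForm θ := by
  have hrange (t : List ℕ) : Ψ (fin t) ∈ range e := ⟨θ t, (h.apply_fin t).symm⟩
  have hsub {p : NStar → Prop} (hp : ∀ c, p c ↔ Ψ c ∈ range e) :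
      range (Subtype.val : Subtype p → NStar) = Ψ ⁻¹' range e := by
    rw [Subtype.range_val_subtype]; exact Set.ext hp
  have hfactor {p : NStar → Prop} (hp : ∀ c, p c ↔ Ψ c ∈ range e) {f : List ℕ → Subtype p}
      (hf : ∀ t, (f t).1 = fin t) : ClosedFactorization f θ :=
    .of_compactSpace h.continuous (h.injective hne) he .subtypeVal (hsub hp)
      fun t => hf t ▸ h.apply_fin t
  rcases hlim with hlim | hlim <;> rcases hinf with hinf | hinf
  · have hr : range id = Ψ ⁻¹' range e := by
      simpa [-mem_range, Set.ext_iff, forall_iff] using ⟨hrange, hlim, hinf⟩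
    exact .finInfLim (.of_compactSpace h.continuous (h.injective hne) he .id hr h.apply_fin)
  · exact .finLim (hfactor
      (by simpa [-mem_range, forall_iff, IsInf] using ⟨hrange, hlim, hinf⟩) fun _ => rfl)
  · exact .finInf (hfactor
      (by simpa [-mem_range, forall_iff, IsLim] using ⟨hrange, hlim, hinf⟩) fun _ => rfl)
  · exact .fin (hfactor
      (by simpa [-mem_range, forall_iff, IsFin] using ⟨hrange, hlim, hinf⟩) fun _ => rfl)

end LimitNormalForm

theorem NowhereClustering.exists_nodeNormalForm {Q Z : Type*} [TopologicalSpace Q] [CompactSpace Q]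
    [MetrizableSpace Q] [TopologicalSpace Z] {e : Z → Q} (he : IsEmbedding e)
    (hrange : MeasureTheory.AnalyticSet (range e)) {θ : List ℕ → Z}
    (hθ : NowhereClustering (e ∘ θ)) : ∃ k, TreeEmbedding k ∧ NodeNormalForm (θ ∘ k) := by
  let := metrizableSpaceMetric Q
  obtain ⟨k₁, hk₁, Ψ, hΨ⟩ := hθ.exists_isLimitExtension
  have hS : MeasureTheory.AnalyticSet {b | Ψ (.inf b) ∈ range e} :=
    hrange.preimage (hΨ.continuous.comp isEmbedding_inf.continuous)
  obtain ⟨k₂, hk₂, heq, hlim, hinf⟩ := exists_treeEmbedding_homogeneous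
    {t | Ψ (.lim t) = Ψ (.fin t)} {t | Ψ (.lim t) ∈ range e}
    (baireMeasurableSet_of_analyticSet hS)
  have hΨ₂ : IsLimitExtension (e ∘ (θ ∘ k₁ ∘ k₂)) (Ψ ∘ NStar.hat k₂) := hΨ.comp_treeEmbedding hk₂
  exact ⟨k₁ ∘ k₂, hk₁.comp hk₂, heq.elim
    (fun heq => hΨ₂.nodeNormalForm_of_lim_eq_fin he heq hinf)
    fun hne => hΨ₂.nodeNormalForm_of_lim_ne_fin he hne hlim hinf⟩

theorem exists_seq_injective_tendsto {Q : Type*} [MetricSpace Q] {η : List ℕ → Q} {y : Q}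
    {s : List ℕ} (hy : ∀ t, s <+: t → y ∈ closure (η '' {d | t <+: d}))
    (hne : ∀ d, s <+: d → η d ≠ y) :
    ∃ d : ℕ → List ℕ, DenseAbove (range d) s ∧ Function.Injective (η ∘ d) ∧
      Filter.Tendsto (η ∘ d) Filter.atTop (𝓝 y) := by
  have : Nonempty {t // s <+: t} := ⟨⟨s, List.prefix_rfl⟩⟩
  obtain ⟨u, hu⟩ := exists_surjective_nat {t // s <+: t}
  have hstep (n : ℕ) (p : {t // s <+: t}) : ∃ d : {t // s <+: t}, (u n).1 <+: d.1 ∧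
      dist (η d) y < min (1 / ((n : ℝ) + 1)) (dist (η p) y) := by
    obtain ⟨_, ⟨d, hd, rfl⟩, hdy⟩ := Metric.mem_closure_iff.1 (hy _ (u n).2) _
      (lt_min (Nat.one_div_pos_of_nat (n := n)) (dist_pos.2 (hne p.1 p.2)))
    exact ⟨⟨d, (u n).2.trans hd⟩, hd, dist_comm y _ ▸ hdy⟩
  choose next hu_next hdist using hstep
  let d (n : ℕ) : {t // s <+: t} := Nat.rec ⟨s, List.prefix_rfl⟩ next n
  have hanti : StrictAnti fun n => dist (η (d n).1) y :=
    strictAnti_nat_of_succ_lt fun n => (hdist n (d n)).trans_le (min_le_right _ _)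
  refine ⟨fun n => (d (n + 1)).1, fun t ht => ?_, fun m n hmn => ?_, ?_⟩
  · obtain ⟨n, hn⟩ := hu ⟨t, ht⟩
    exact ⟨_, mem_range_self n, by simpa only [hn] using hu_next n (d n)⟩
  · exact Nat.succ_injective (hanti.injective (congrArg (dist · y) hmn))
  · exact tendsto_iff_dist_tendsto_zero.2 (squeeze_zero (fun _ => dist_nonneg)
      (fun n => ((hdist n (d n)).trans_le (min_le_left _ _)).le)
      tendsto_one_div_add_atTop_nhds_zero_nat)

section OnePoint

variable {I Q : Type*} {y : Q} {η : I → Q}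

theorem injective_onePoint_elim (hη : Function.Injective η) (hy : ∀ i, η i ≠ y) :
    Function.Injective fun c : OnePoint I => c.elim y η := fun c c' h => by
  induction c using OnePoint.rec <;> induction c' using OnePoint.rec
  · rfl
  · exact absurd h.symm (hy _)
  · exact absurd h (hy _)
  · exact congrArg _ (hη h)

theorem ClosedFactorization.fin_or_onePoint {Z : Type*} [TopologicalSpace I] [DiscreteTopology I]
    [TopologicalSpace Q] [T2Space Q] [TopologicalSpace Z] {e : Z → Q} (he : IsEmbedding e)
    {θ : I → Z} (hθ : Function.Injective θ)
    (hlim : Filter.Tendsto (e ∘ θ) Filter.cofinite (𝓝 y)) (hy : ∀ i, e (θ i) ≠ y) :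
    ClosedFactorization id θ ∨ ClosedFactorization ((↑) : I → OnePoint I) θ := by
  have hc : Continuous fun c : OnePoint I => c.elim y (e ∘ θ) :=
    (OnePoint.continuous_iff_from_discrete _).2 hlim
  have hi := injective_onePoint_elim (he.injective.comp hθ) hy
  by_cases hye : y ∈ range e
  · refine Or.inr (.of_compactSpace hc hi he .id ?_ fun _ => rfl)
    rw [range_id, eq_comm, eq_univ_iff_forall]
    exact OnePoint.rec hye fun i => mem_range_self (θ i)
  · refine Or.inl (.of_compactSpace hc hi he OnePoint.isOpenEmbedding_coe.isEmbedding ?_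
      fun _ => rfl)
    refine Set.ext (OnePoint.rec ?_ fun i => ?_)
    · simpa using hye
    · exact iff_of_true (mem_range_self i) (mem_range_self (θ i))

end OnePoint

instance : DiscreteTopology NFin := discreteTopology_iff_isOpen_singleton.2 fun ⟨_, t, h⟩ => by
  convert (NStar.isClopen_singleton_fin t).isOpen.preimage continuous_subtype_val
  simp [Set.ext_iff, Subtype.ext_iff, h]

theorem bijective_finPt : Function.Bijective finPt :=
  ⟨fun _ _ h => NStar.fin.inj (congrArg Subtype.val h), fun ⟨_, t, h⟩ => ⟨t, Subtype.ext h.symm⟩⟩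

theorem exists_treeEmbedding_injective_tendsto {Q : Type*} [MetricSpace Q] {η : List ℕ → Q} {y : Q}
    {s : List ℕ} (hy : ∀ t, s <+: t → y ∈ closure (η '' {d | t <+: d}))
    (hne : ∀ d, s <+: d → η d ≠ y) :
    ∃ k, TreeEmbedding k ∧ (∀ t, s <+: k t) ∧ Function.Injective (η ∘ k) ∧
      Filter.Tendsto (η ∘ k) Filter.cofinite (𝓝 y) := by
  obtain ⟨d, hd, hinj, hlim⟩ := exists_seq_injective_tendsto hy hne
  obtain ⟨k, hk, hkd, -⟩ := hd.exists_treeEmbedding Filter.univ_mem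
  choose N hN using fun t => (hkd t).1
  obtain rfl : d ∘ N = k := funext hN
  have hNi : Function.Injective N := hk.injective.of_comp
  exact ⟨_, hk, fun t => (hkd t).2, hinj.comp hNi,
    (Nat.cofinite_eq_atTop ▸ hlim).comp hNi.tendsto_cofinite⟩

theorem exists_nodeNormalForm_of_mem_closure {Q Z : Type*} [TopologicalSpace Q] [MetrizableSpace Q]
    [TopologicalSpace Z] {e : Z → Q} (he : IsEmbedding e) {θ : List ℕ → Z} {y : Q} {s : List ℕ}
    (hy : ∀ t, s <+: t → y ∈ closure (e ∘ θ '' {d | t <+: d})) :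
    ∃ k, TreeEmbedding k ∧ NodeNormalForm (θ ∘ k) := by
  by_cases hD : DenseAbove {d | e (θ d) = y} s
  · obtain ⟨k, hk, hkD, -⟩ := hD.exists_treeEmbedding Filter.univ_mem
    exact ⟨k, hk, .const ⟨θ (k []), fun t => he.injective ((hkD t).1.trans (hkD []).1.symm)⟩⟩
  obtain ⟨s', hss', hne⟩ := not_denseAbove_iff.1 hD
  let := metrizableSpaceMetric Q
  obtain ⟨k, hk, hs'k, hinj, hlim⟩ := exists_treeEmbedding_injective_tendsto
    (fun t ht => hy t (hss'.trans ht)) fun d hd h => hne d h hd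
  have hθk : Function.Injective (θ ∘ k) := .of_comp (f := e) hinj
  let finEquiv : List ℕ ≃ NFin := .ofBijective finPt bijective_finPt
  have hθ : θ ∘ k = (θ ∘ k ∘ finEquiv.symm) ∘ finPt :=
    funext fun t => congrArg (θ ∘ k) (finEquiv.symm_apply_apply t).symm
  refine ⟨k, hk, ?_⟩
  rw [hθ]
  obtain h | h := ClosedFactorization.fin_or_onePoint he
    (hθk.comp finEquiv.symm.injective)
    (hlim.comp finEquiv.symm.injective.tendsto_cofinite)
    fun c h => hne _ h (hs'k (finEquiv.symm c))
  · exact .fin (h.comp_right finPt)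
  · exact .onePoint (h.comp_right finPt)

theorem exists_nodeNormalForm {Z : Type*} [TopologicalSpace Z] [MetrizableSpace Z]
    (hZ : IsAnalytic Z) (θ : List ℕ → Z) : ∃ k, TreeEmbedding k ∧ NodeNormalForm (θ ∘ k) := by
  have := hZ.separableSpace
  obtain ⟨e, he⟩ := exists_isEmbedding_hilbertCube Z
  by_cases hθ : NowhereClustering (e ∘ θ)
  · exact hθ.exists_nodeNormalForm he (hZ.analyticSet_range he.continuous)
  · simp only [NowhereClustering, not_forall, not_exists, not_and, not_not] at hθ
    obtain ⟨y, s, hy⟩ := hθ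
    exact exists_nodeNormalForm_of_mem_closure he hy

/-! ## Embedding the sum of two functions -/

theorem ClosedContinuousEmbedding.of_isClosedEmbedding {M X B Y : Type*} [TopologicalSpace M]
    [TopologicalSpace X] [TopologicalSpace B] [TopologicalSpace Y] {ψ : M → B} {φ : X → Y}
    {h : M → X} (hh : IsClosedEmbedding h) {S : B → Y} (hS : IsClosedEmbedding S)
    (hcomm : ∀ c, φ (h c) = S (ψ c)) : ClosedContinuousEmbedding ψ φ := by
  have hmaps : MapsTo S (closure (range ψ)) (closure (range φ)) := fun x hx =>
    map_mem_closure hS.continuous hx (by rintro _ ⟨c, rfl⟩; exact ⟨h c, hcomm c⟩)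
  have hval := (isClosed_closure (s := range φ)).isClosedEmbedding_subtypeVal
  have hr : IsClosedEmbedding hmaps.restrict := hval.of_comp_iff.1
    (hS.comp isClosed_closure.isClosedEmbedding_subtypeVal)
  exact ⟨h, hmaps.restrict, hh.continuous, hh.injective, hh.isClosedMap, hr.continuous,
    hr.injective, hr.isClosedMap, hcomm⟩

/-- An injective continuous copy of `ℕ^ℕ_*` in the domain of `φ` along which `φ` sends the infinite
sequences and the points `t⌢⟨∞⟩` into two disjoint closed sets. -/
structure SplitCopy {X Y : Type*} [TopologicalSpace X] [TopologicalSpace Y] (φ : X → Y) where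
  C : Set Y
  D : Set Y
  isClosed_C : IsClosed C
  isClosed_D : IsClosed D
  disjoint : Disjoint C D
  toFun : NNStar → X
  continuous : Continuous toFun
  injective : Function.Injective toFun
  map_infPt_mem : ∀ b, φ (toFun (infPt b)) ∈ C
  map_limPt_mem : ∀ t, φ (toFun (limPt t).toNN) ∈ D

namespace SplitCopy

variable {X Y : Type*} [TopologicalSpace X] [TopologicalSpace Y] {φ : X → Y}

/-- The restriction of `φ` to the copy of `ℕ^ℕ`. -/
def onInf (P : SplitCopy φ) (b : ℕ → ℕ) : P.C := ⟨φ (P.toFun (infPt b)), P.map_infPt_mem b⟩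

/-- The restriction of `φ` to the copy of `ℕ^ℕ_* ∖ ℕ^ℕ`, indexed by `ℕ^{<ℕ}`. -/
def onLim (P : SplitCopy φ) (t : List ℕ) : P.D := ⟨φ (P.toFun (limPt t).toNN), P.map_limPt_mem t⟩

/-- The copy of `ℕ^ℕ_*` obtained by passing to the range of a tree embedding. -/
def comp (P : SplitCopy φ) {k : List ℕ → List ℕ} (hk : TreeEmbedding k) : SplitCopy φ where
  C := P.C
  D := P.D
  isClosed_C := P.isClosed_C
  isClosed_D := P.isClosed_D
  disjoint := P.disjoint
  toFun := P.toFun ∘ hatNN k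
  continuous := P.continuous.comp hk.continuous_hatNN
  injective := P.injective.comp hk.injective_hatNN
  map_infPt_mem b := P.map_infPt_mem (limSeq k b)
  map_limPt_mem t := P.map_limPt_mem (k t)

theorem borelFun_onInf (P : SplitCopy φ) (hφ : BorelFun φ) : BorelFun P.onInf := fun V hV => by
  obtain ⟨W, hW, rfl⟩ := isOpen_induced_iff.1 hV
  borelize X (ℕ → ℕ)
  exact (P.continuous.comp isEmbedding_infPt.continuous).measurable (hφ W hW)

theorem closedContinuousEmbedding [T2Space X] (P : SplitCopy φ) {A B : Type*} [TopologicalSpace A]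
    [TopologicalSpace B] {f : (ℕ → ℕ) → A} {g : NLim → B} (hf : ClosedFactorization f P.onInf)
    (hg : ClosedFactorization (g ∘ limPt) P.onLim) :
    ClosedContinuousEmbedding (combine2 f g) φ := by
  obtain ⟨a, ha, haf⟩ := hf
  obtain ⟨b, hb, hbg⟩ := hg
  have ha' := P.isClosed_C.isClosedEmbedding_subtypeVal.comp ha
  have hb' := P.isClosed_D.isClosedEmbedding_subtypeVal.comp hb
  have hS : IsClosedEmbedding (Sum.elim (Subtype.val ∘ a) (Subtype.val ∘ b)) :=
    .of_continuous_injective_isClosedMap (ha'.continuous.sumElim hb'.continuous)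
      (ha'.injective.sumElim hb'.injective fun x y => P.disjoint.ne_of_mem (a x).2 (b y).2)
      (ha'.isClosedMap.sumElim hb'.isClosedMap)
  refine .of_isClosedEmbedding (P.continuous.isClosedEmbedding P.injective) hS ?_
  rintro ⟨t | x | t, hc⟩
  · exact absurd ⟨t, rfl⟩ hc
  · exact congrArg Subtype.val (haf x)
  · exact congrArg Subtype.val (hbg t)

end SplitCopy

/-! ## The basis theorem -/

section Basis

variable {X Y : Type*} [TopologicalSpace X] [TopologicalSpace Y] {φ : X → Y}

theorem FsigmaSeparated.exists_eq_iUnion {A : Set X} (h : FsigmaSeparated A Aᶜ) :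
    ∃ F : ℕ → Set X, (∀ n, IsClosed (F n)) ∧ A = ⋃ n, F n := by
  obtain ⟨S, hSc, hS, hAS⟩ := h
  have hS' : ∀ F ∈ insert ∅ S, IsClosed F ∧ F ⊆ A := forall_mem_insert.2
    ⟨⟨isClosed_empty, empty_subset A⟩,
      fun F hF => (hS F hF).imp_right disjoint_compl_right_iff_subset.1⟩
  obtain ⟨F, hF⟩ := (hSc.insert ∅).exists_eq_range (insert_nonempty _ _)
  rw [hF, forall_mem_range] at hS'
  refine ⟨F, fun n => (hS' n).1, (hAS.trans ?_).antisymm (iUnion_subset fun n => (hS' n).2)⟩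
  rw [← sUnion_range, ← hF]
  exact sUnion_subset_sUnion (subset_insert ∅ S)

theorem exists_isClosed_not_fsigmaSeparated [MetrizableSpace Y] (h : ¬ BaireClassOneFun φ) :
    ∃ C D : Set Y, IsClosed C ∧ IsClosed D ∧ Disjoint C D ∧
      ¬ FsigmaSeparated (φ ⁻¹' C) (φ ⁻¹' D) := by
  contrapose! h
  intro V hV
  let := metrizableSpaceMetric Y
  obtain ⟨C, hC, hCV, rfl, -⟩ := hV.exists_iUnion_isClosed
  refine FsigmaSeparated.exists_eq_iUnion ?_
  rw [← preimage_compl, preimage_iUnion]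
  exact .iUnion fun n => h (C n) _ (hC n) hV.isClosed_compl
    (disjoint_compl_right_iff_subset.2 (hCV n))

theorem nonempty_splitCopy [T3Space X] [FirstCountableTopology X] [MetrizableSpace Y]
    (hX : IsAnalytic X) (hφ : BorelFun φ) (h : ¬ BaireClassOneFun φ) : Nonempty (SplitCopy φ) := by
  obtain ⟨C, D, hC, hD, hCD, hsep⟩ := exists_isClosed_not_fsigmaSeparated h
  have hφC : MeasureTheory.AnalyticSet (φ ⁻¹' C) := hX.analyticSet_of_measurableSet <| by
    borelize X
    simpa only [preimage_compl, compl_compl] using (hφ Cᶜ hC.isOpen_compl).compl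
  rw [MeasureTheory.AnalyticSet] at hφC
  obtain hempty | ⟨f, hf, hfC⟩ := hφC
  · rw [hempty] at hsep
    exact absurd (.of_isClosed isClosed_empty (empty_disjoint _)) hsep
  rw [← hfC] at hsep
  have hfD : Disjoint (range f) (φ ⁻¹' D) := hfC ▸ hCD.preimage φ
  obtain ⟨g, hg, hgi, hinf, hlim⟩ := exists_injective_of_not_fsigmaSeparated hf hfD hsep
  exact ⟨⟨C, D, hC, hD, hCD, g, hg, hgi, fun b => hfC.subset (hinf b), hlim⟩⟩

theorem exists_splitCopy_normalForm [T3Space X] [FirstCountableTopology X] [MetrizableSpace Y]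
    (hX : IsAnalytic X) (hY : IsAnalytic Y) (hφ : BorelFun φ) (h : ¬ BaireClassOneFun φ) :
    ∃ P : SplitCopy φ, BranchNormalForm P.onInf ∧ NodeNormalForm P.onLim := by
  have := hY.separableSpace
  have : SecondCountableTopology Y :=
    let := metrizableSpaceMetric Y
    UniformSpace.secondCountable_of_separable Y
  obtain ⟨P⟩ := nonempty_splitCopy hX hφ h
  obtain ⟨k, hk, hinf⟩ := (P.borelFun_onInf hφ).exists_branchNormalForm
  obtain ⟨l, hl, hlim⟩ := exists_nodeNormalForm (hY.of_isClosed P.isClosed_D) (P.comp hk).onLim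
  exact ⟨(P.comp hk).comp hl, hinf.comp_limSeq hl, hlim⟩

end Basis

theorem stmt_18_general {X Y : Type*} [TopologicalSpace X] [T3Space X] [FirstCountableTopology X]
    [TopologicalSpace Y] [MetrizableSpace Y] (hX : IsAnalytic X) (hY : IsAnalytic Y) (φ : X → Y)
    (h1 : BorelFun φ) (h2 : ¬ BaireClassOneFun φ) :
    ClosedContinuousEmbedding (combine2 f1 g1) φ ∨
    ClosedContinuousEmbedding (combine2 f1 g2) φ ∨
    ClosedContinuousEmbedding (combine2 f1 g3) φ ∨
    ClosedContinuousEmbedding (combine2 f1 g4) φ ∨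
    ClosedContinuousEmbedding (combine2 f1 g5) φ ∨
    ClosedContinuousEmbedding (combine2 f1 g6) φ ∨
    ClosedContinuousEmbedding (combine2 f1 g7) φ ∨
    ClosedContinuousEmbedding (combine2 f1 g8) φ ∨
    ClosedContinuousEmbedding (combine2 f2 g1) φ ∨
    ClosedContinuousEmbedding (combine2 f2 g2) φ ∨
    ClosedContinuousEmbedding (combine2 f2 g3) φ ∨
    ClosedContinuousEmbedding (combine2 f2 g4) φ ∨
    ClosedContinuousEmbedding (combine2 f2 g5) φ ∨
    ClosedContinuousEmbedding (combine2 f2 g6) φ ∨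
    ClosedContinuousEmbedding (combine2 f2 g7) φ ∨
    ClosedContinuousEmbedding (combine2 f2 g8) φ ∨
    ClosedContinuousEmbedding (combine2 f3 g1) φ ∨
    ClosedContinuousEmbedding (combine2 f3 g2) φ ∨
    ClosedContinuousEmbedding (combine2 f3 g3) φ ∨
    ClosedContinuousEmbedding (combine2 f3 g4) φ ∨
    ClosedContinuousEmbedding (combine2 f3 g5) φ ∨
    ClosedContinuousEmbedding (combine2 f3 g6) φ ∨
    ClosedContinuousEmbedding (combine2 f3 g7) φ ∨
    ClosedContinuousEmbedding (combine2 f3 g8) φ := by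
  obtain ⟨P, hf, hg⟩ := exists_splitCopy_normalForm hX hY h1 h2
  rcases hf with hf | hf | hf <;> rcases hg with hg | hg | hg | hg | hg | hg | hg | hg
  -- `f1` and `g1` occur at different universe levels in the disjuncts, so a constant is converted
  -- to a factorization only once the disjunct is chosen.
  all_goals
    repeat first
    | refine Or.inl (P.closedContinuousEmbedding ?_ ?_) <;>
        first | exact hf | exact hg | exact .of_subsingleton (by assumption) _
    | exact P.closedContinuousEmbedding hf hg
    | apply Or.inr

/-- a twenty-four-element basis for Borel functions that are not
Baire class one. -/
theorem stmt_18 {X Y : Type*} [MetricSpace X] [MetricSpace Y] (hX : IsAnalytic X)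
    (hY : IsAnalytic Y) (φ : X → Y) (h1 : BorelFun φ) (h2 : ¬ BaireClassOneFun φ) :
    ClosedContinuousEmbedding (combine2 f1 g1) φ ∨
    ClosedContinuousEmbedding (combine2 f1 g2) φ ∨
    ClosedContinuousEmbedding (combine2 f1 g3) φ ∨
    ClosedContinuousEmbedding (combine2 f1 g4) φ ∨
    ClosedContinuousEmbedding (combine2 f1 g5) φ ∨
    ClosedContinuousEmbedding (combine2 f1 g6) φ ∨
    ClosedContinuousEmbedding (combine2 f1 g7) φ ∨
    ClosedContinuousEmbedding (combine2 f1 g8) φ ∨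
    ClosedContinuousEmbedding (combine2 f2 g1) φ ∨
    ClosedContinuousEmbedding (combine2 f2 g2) φ ∨
    ClosedContinuousEmbedding (combine2 f2 g3) φ ∨
    ClosedContinuousEmbedding (combine2 f2 g4) φ ∨
    ClosedContinuousEmbedding (combine2 f2 g5) φ ∨
    ClosedContinuousEmbedding (combine2 f2 g6) φ ∨
    ClosedContinuousEmbedding (combine2 f2 g7) φ ∨
    ClosedContinuousEmbedding (combine2 f2 g8) φ ∨
    ClosedContinuousEmbedding (combine2 f3 g1) φ ∨
    ClosedContinuousEmbedding (combine2 f3 g2) φ ∨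
    ClosedContinuousEmbedding (combine2 f3 g3) φ ∨
    ClosedContinuousEmbedding (combine2 f3 g4) φ ∨
    ClosedContinuousEmbedding (combine2 f3 g5) φ ∨
    ClosedContinuousEmbedding (combine2 f3 g6) φ ∨
    ClosedContinuousEmbedding (combine2 f3 g7) φ ∨
    ClosedContinuousEmbedding (combine2 f3 g8) φ :=
  stmt_18_general hX hY φ h1 h2
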